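/- For Thompson's group F, the vanishing Hb^n(F, E) = 0 holds for all n ≥ 1 and all separable dual Banach F-modules E. -/

import Mathlib

open scoped BigOperators

/-- A cochain (function into a normed space) is bounded if its norms are uniformly bounded. -/
def IsBddCochain {G : Type*} {E : Type*} [NormedAddCommGroup E] {n : ℕ}
    (f : (Fin n → G) → E) : Prop :=
  ∃ C : ℝ, ∀ g, ‖f g‖ ≤ C

/-- The inhomogeneous coboundary operator of bounded cohomology, for an action `π` of
`G` on `E`:
`(δf)(g₁,…,g_{n+1}) = g₁•f(g₂,…,g_{n+1}) + ∑_{i=1}^{n} (−1)^i f(g₁,…,g_i·g_{i+1},…,g_{n+1})`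
`+ (−1)^{n+1} f(g₁,…,g_n)`. -/
def bddDelta {G : Type*} [Group G] {E : Type*} [NormedAddCommGroup E] [Module ℝ E]
    (π : G → E → E) (n : ℕ) (f : (Fin n → G) → E) : (Fin (n + 1) → G) → E :=
  fun g =>
    π (g 0) (f (fun j => g j.succ)) +
    (∑ i : Fin n, ((-1 : ℝ) ^ ((i : ℕ) + 1)) •
      f (fun j => if (j : ℕ) < (i : ℕ) then g (Fin.castSucc j)
        else if (j : ℕ) = (i : ℕ) then g (Fin.castSucc j) * g j.succ
        else g j.succ)) +
    ((-1 : ℝ) ^ (n + 1)) • f (fun j => g (Fin.castSucc j))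

/-- Vanishing of the bounded cohomology `Hb^n(G,E)` for all `n ≥ 1`, with respect to the
`G`-action `π` on `E`: every bounded cocycle of degree `n ≥ 1` is the coboundary of a
bounded cochain. -/
def HbVanish {G : Type*} [Group G] {E : Type*} [NormedAddCommGroup E] [Module ℝ E]
    (π : G → E → E) : Prop :=
  ∀ (n : ℕ) (f : (Fin (n + 1) → G) → E), IsBddCochain f →
    bddDelta π (n + 1) f = 0 →
    ∃ b : (Fin n → G) → E, IsBddCochain b ∧ bddDelta π n b = f

/-- A group is boundedly acyclic if `Hb^n(G,ℝ) = 0` for all `n ≥ 1`, where `ℝ` carries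
the trivial `G`-action. -/
def BoundedlyAcyclic (G : Type*) [Group G] : Prop :=
  HbVanish (G := G) (E := ℝ) (fun _ v => v)

/-- A real number is a dyadic rational if it is of the form `a / 2 ^ b` with `a`, `b`
integers. -/
def IsDyadic (r : ℝ) : Prop := ∃ (a : ℤ) (b : ℕ), r = a / 2 ^ b

/-- A permutation of `[0,1]` belongs to Thompson's group `F` iff it is an increasing
bijection which is piecewise affine with finitely many breakpoints, all breakpoints
being dyadic rationals and all slopes being integer powers of `2`.  (Such a map is
automatically a homeomorphism of `[0,1]`.) -/
def IsThompson (f : Equiv.Perm ↥(Set.Icc (0 : ℝ) 1)) : Prop :=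
  StrictMono (fun x => (f x : ℝ)) ∧
  ∃ s : Finset ℝ, (∀ q ∈ s, IsDyadic q) ∧
    ∀ x y : ↥(Set.Icc (0 : ℝ) 1), (x : ℝ) ≤ y →
      (∀ q ∈ s, q ∉ Set.Ioo (x : ℝ) (y : ℝ)) →
      ∃ m : ℤ, ∀ t : ↥(Set.Icc (0 : ℝ) 1), (t : ℝ) ∈ Set.Icc (x : ℝ) (y : ℝ) →
        (f t : ℝ) = (f x : ℝ) + (2 : ℝ) ^ m * ((t : ℝ) - (x : ℝ))

/-- The contragredient action of `G` on the continuous dual of `F` induced by an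
isometric action `ρ` of `G` on `F`: `(g • φ)(v) = φ (g⁻¹ • v)`. -/
def contragredient {G : Type*} [Group G] {F : Type*} [NormedAddCommGroup F]
    [NormedSpace ℝ F] (ρ : G →* (F ≃ₗᵢ[ℝ] F)) : G → (F →L[ℝ] ℝ) → (F →L[ℝ] ℝ) :=
  fun g φ => φ.comp (ρ g⁻¹).toLinearIsometry.toContinuousLinearMap

section Helpers
open Filter Topology
set_option linter.unusedSectionVars false
set_option linter.style.haveILetI false

section MK
variable {V : Type*} [AddCommGroup V] [Module ℝ V] [TopologicalSpace V]
  [IsTopologicalAddGroup V] [ContinuousSMul ℝ V] [T2Space V]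

/-- Markov's fixed point theorem for a single map. -/
theorem mk_single (X : Set V) (hc : IsCompact X) (hconv : Convex ℝ X) (hne : X.Nonempty)
    (A : V →L[ℝ] V) (hA : ∀ x ∈ X, A x ∈ X) : ∃ x ∈ X, A x = x := by
  obtain ⟨x0, hx0⟩ := hne
  have hit : ∀ i : ℕ, (A^[i]) x0 ∈ X := by
    intro i
    induction i with
    | zero => simpa using hx0
    | succ k ih => rw [Function.iterate_succ_apply']; exact hA _ ih
  let y : ℕ → V := fun N => ((N + 1 : ℕ) : ℝ)⁻¹ • ∑ i ∈ Finset.range (N + 1), (A^[i]) x0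
  have hy : ∀ N, y N ∈ X := by
    intro N
    simp only [y]
    rw [Finset.smul_sum]
    refine hconv.sum_mem (fun i _ => by positivity) ?_ (fun i _ => hit i)
    rw [Finset.sum_const, Finset.card_range, nsmul_eq_mul]
    exact mul_inv_cancel₀ (by positivity)
  have hdiff : ∀ N, A (y N) - y N = ((N + 1 : ℕ) : ℝ)⁻¹ • ((A^[N+1]) x0 - x0) := by
    intro N
    simp only [y]
    rw [map_smul, map_sum, ← smul_sub, ← Finset.sum_sub_distrib]
    congr 1
    have := Finset.sum_range_sub (fun i => (A^[i]) x0) (N + 1)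
    simp only [Function.iterate_succ_apply', Function.iterate_zero, id] at this ⊢
    exact this
  have hb : Bornology.IsVonNBounded ℝ X := hc.isVonNBounded ℝ
  have hinv : Tendsto (fun N : ℕ => ((N + 1 : ℕ) : ℝ)⁻¹) atTop (𝓝 0) := by
    have := tendsto_one_div_add_atTop_nhds_zero_nat (𝕜 := ℝ)
    refine this.congr (fun n => by push_cast; rw [one_div])
  have hz : Tendsto (fun N => A (y N) - y N) atTop (𝓝 0) := by
    have h1 := hb.smul_tendsto_zero (Eventually.of_forall (fun N : ℕ => hit (N+1))) hinv
    have h2 := hb.smul_tendsto_zero (Eventually.of_forall (fun N : ℕ => hx0)) hinv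
    have h3 := h1.sub h2
    rw [sub_zero] at h3
    refine h3.congr (fun N => ?_)
    rw [hdiff, smul_sub]
    rfl
  obtain ⟨x, hx, hcl⟩ := hc (f := map y atTop) (by
    rw [le_principal_iff]
    exact mem_map.2 (Eventually.of_forall hy))
  refine ⟨x, hx, ?_⟩
  have hcont : Continuous (fun x => A x - x) := A.continuous.sub continuous_id
  have h1 : ClusterPt (A x - x) (map (fun N => A (y N) - y N) atTop) := by
    have h2 := hcl.map hcont.continuousAt tendsto_map
    rw [map_map] at h2
    exact h2
  have h4 : ClusterPt (A x - x) (𝓝 (0:V)) := h1.mono hz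
  have : A x - x = 0 := eq_of_nhds_neBot h4
  exact sub_eq_zero.1 this

/-- Markov–Kakutani for maps commuting on the set. -/
theorem mk_family {I : Type*} (X : Set V) (hc : IsCompact X) (hconv : Convex ℝ X)
    (hne : X.Nonempty) (A : I → V →L[ℝ] V) (hA : ∀ i, ∀ x ∈ X, A i x ∈ X)
    (hcomm : ∀ i j, ∀ x ∈ X, A i (A j x) = A j (A i x)) : ∃ x ∈ X, ∀ i, A i x = x := by
  have hcl : ∀ i, IsClosed {x | A i x = x} := fun i => isClosed_eq (A i).continuous continuous_id
  have hfin : ∀ u : Finset I, (X ∩ ⋂ i ∈ u, {x | A i x = x}).Nonempty := by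
    classical
    intro u
    induction u using Finset.induction_on with
    | empty => simpa using hne
    | insert a s _ ih =>
      have := mk_single (X ∩ ⋂ i ∈ s, {x | A i x = x})
        (hc.inter_right (isClosed_biInter fun i _ => hcl i)) (by
          refine hconv.inter (convex_iInter₂ fun i _ => ?_)
          intro x hx y hy a b _ _ _
          simp only [Set.mem_ofPred_eq] at hx hy ⊢
          rw [map_add, map_smul, map_smul, hx, hy]) ih (A a) (by
          rintro x ⟨hx, hx2⟩
          refine ⟨hA a x hx, ?_⟩
          simp only [Set.mem_iInter, Set.mem_ofPred_eq] at hx2 ⊢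
          intro i hi
          rw [hcomm i a x hx, hx2 i hi])
      obtain ⟨x, ⟨hx, hx2⟩, hx3⟩ := this
      refine ⟨x, hx, ?_⟩
      simp only [Set.mem_iInter, Set.mem_ofPred_eq, Finset.mem_insert] at hx2 ⊢
      rintro i (rfl | hi)
      · exact hx3
      · exact hx2 i hi
  obtain ⟨x, hx, hx2⟩ := hc.inter_iInter_nonempty (fun i => {x | A i x = x}) hcl hfin
  simp only [Set.mem_iInter, Set.mem_ofPred_eq] at hx2
  exact ⟨x, hx, hx2⟩
end MK

section ListCalc
variable {G : Type*} {W : Type*} [AddCommGroup W] [Module ℝ W]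

/-- Insertion of a first variable. -/
def lcI (a : G) (c : List G → W) : List G → W := fun x => c (a :: x)

/-- The homogeneous coboundary, on functions of lists. -/
def lcD : (List G → W) → List G → W
  | _, [] => 0
  | c, a :: x => c x - lcD (lcI a c) x

/-- Random substitution `a ↦ κ a i`, independently in every variable. -/
noncomputable def lcR {ι : Type*} [Fintype ι] (κ : G → ι → G) : (List G → W) → List G → W
  | c, [] => c []
  | c, a :: x => ((Fintype.card ι : ℝ))⁻¹ • ∑ i, lcR κ (lcI (κ a i) c) x

/-- The prism operator between the identity and `lcR κ`. -/
noncomputable def lcH {ι : Type*} [Fintype ι] (κ : G → ι → G) : (List G → W) → List G → W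
  | _, [] => 0
  | c, a :: x => ((Fintype.card ι : ℝ))⁻¹ • ∑ i, lcR κ (lcI (κ a i) (lcI a c)) x
      - lcH κ (lcI a c) x

theorem lcI_add (a : G) (c d : List G → W) : lcI a (c + d) = lcI a c + lcI a d := rfl
theorem lcI_smul (a : G) (r : ℝ) (c : List G → W) : lcI a (r • c) = r • lcI a c := rfl

theorem lcD_add (x : List G) : ∀ c d : List G → W, lcD (c + d) x = lcD c x + lcD d x := by
  induction x with
  | nil => intro c d; simp [lcD]
  | cons a x ih => intro c d; simp only [lcD, lcI_add, ih, Pi.add_apply]; abel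

theorem lcD_smul (r : ℝ) (x : List G) : ∀ c : List G → W, lcD (r • c) x = r • lcD c x := by
  induction x with
  | nil => intro c; simp [lcD]
  | cons a x ih => intro c; simp only [lcD, lcI_smul, ih, Pi.smul_apply, smul_sub]

section
variable {ι : Type*} [Fintype ι] (κ : G → ι → G)

theorem lcR_add (x : List G) : ∀ c d : List G → W, lcR κ (c + d) x = lcR κ c x + lcR κ d x := by
  induction x with
  | nil => intro c d; simp [lcR]
  | cons a x ih => intro c d; simp only [lcR, lcI_add, ih, Finset.sum_add_distrib, smul_add]

theorem lcR_smul (r : ℝ) (x : List G) : ∀ c : List G → W, lcR κ (r • c) x = r • lcR κ c x := by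
  induction x with
  | nil => intro c; simp [lcR]
  | cons a x ih =>
    intro c; simp only [lcR, lcI_smul, ih, ← Finset.smul_sum]; rw [smul_comm]

theorem lcH_add (x : List G) : ∀ c d : List G → W, lcH κ (c + d) x = lcH κ c x + lcH κ d x := by
  induction x with
  | nil => intro c d; simp [lcH]
  | cons a x ih =>
    intro c d
    simp only [lcH, lcI_add, ih, lcR_add, Finset.sum_add_distrib, smul_add]; abel

theorem lcH_smul (r : ℝ) (x : List G) : ∀ c : List G → W, lcH κ (r • c) x = r • lcH κ c x := by
  induction x with
  | nil => intro c; simp [lcH]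
  | cons a x ih =>
    intro c
    simp only [lcH, lcI_smul, ih, lcR_smul, ← Finset.smul_sum, smul_sub]; rw [smul_comm]

/-- Linear bundling. -/
def lcDL : (List G → W) →ₗ[ℝ] (List G → W) where
  toFun := lcD
  map_add' c d := funext fun x => lcD_add x c d
  map_smul' r c := funext fun x => lcD_smul r x c

noncomputable def lcRL : (List G → W) →ₗ[ℝ] (List G → W) where
  toFun := lcR κ
  map_add' c d := funext fun x => lcR_add κ x c d
  map_smul' r c := funext fun x => lcR_smul κ r x c

noncomputable def lcHL : (List G → W) →ₗ[ℝ] (List G → W) where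
  toFun := lcH κ
  map_add' c d := funext fun x => lcH_add κ x c d
  map_smul' r c := funext fun x => lcH_smul κ r x c

theorem lcD_sub (c d : List G → W) : lcD (c - d) = lcD c - lcD d := map_sub lcDL c d
theorem lcR_sub (c d : List G → W) : lcR κ (c - d) = lcR κ c - lcR κ d := map_sub (lcRL κ) c d
theorem lcH_sub (c d : List G → W) : lcH κ (c - d) = lcH κ c - lcH κ d := map_sub (lcHL κ) c d

/-- Random first variable. -/
noncomputable def lcS (a : G) (c : List G → W) : List G → W :=
  ((Fintype.card ι : ℝ))⁻¹ • ∑ i, lcI (κ a i) c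

theorem lcR_cons (a : G) (c : List G → W) (x : List G) :
    lcR κ c (a :: x) = lcR κ (lcS κ a c) x := by
  have : lcRL κ (lcS κ a c) = ((Fintype.card ι : ℝ))⁻¹ • ∑ i, lcRL κ (lcI (κ a i) c) := by
    rw [lcS, map_smul, map_sum]
  have h := congrFun this x
  simp only [Pi.smul_apply, Finset.sum_apply] at h
  exact h.symm

theorem lcI_R (a : G) (c : List G → W) : lcI a (lcR κ c) = lcR κ (lcS κ a c) :=
  funext fun x => lcR_cons κ a c x

theorem lcI_D (a : G) (c : List G → W) : lcI a (lcD c) = c - lcD (lcI a c) := rfl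

theorem lcI_H (a : G) (c : List G → W) :
    lcI a (lcH κ c) = lcR κ (lcS κ a (lcI a c)) - lcH κ (lcI a c) := by
  funext x
  show lcH κ c (a :: x) = _
  rw [Pi.sub_apply, ← lcR_cons]
  rfl

theorem lcS_D [Nonempty ι] (a : G) (c : List G → W) :
    lcS κ a (lcD c) = c - lcD (lcS κ a c) := by
  have h1 : lcD (lcS κ a c) = ((Fintype.card ι : ℝ))⁻¹ • ∑ i, lcD (lcI (κ a i) c) := by
    show lcDL (lcS κ a c) = _
    rw [lcS, map_smul, map_sum]; rfl
  rw [h1, lcS]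
  simp only [lcI_D, Finset.sum_sub_distrib, smul_sub, Finset.sum_const, Finset.card_univ]
  rw [← Nat.cast_smul_eq_nsmul ℝ, smul_smul, inv_mul_cancel₀, one_smul]
  exact Nat.cast_ne_zero.2 Fintype.card_ne_zero

theorem lcDR [Nonempty ι] (x : List G) : ∀ c : List G → W, lcD (lcR κ c) x = lcR κ (lcD c) x := by
  induction x with
  | nil => intro c; rfl
  | cons a x ih =>
    intro c
    rw [lcR_cons, lcS_D, lcR_sub]
    simp only [lcD, lcI_R, ih, Pi.sub_apply]

theorem lc_homotopy [Nonempty ι] (x : List G) : ∀ c : List G → W,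
    lcD (lcH κ c) x + lcH κ (lcD c) x = lcR κ c x - c x := by
  induction x with
  | nil => intro c; simp [lcD, lcH, lcR]
  | cons a x ih =>
    intro c
    have e1 : lcD (lcH κ c) (a :: x) = lcH κ c x - (lcR κ (lcD (lcS κ a (lcI a c))) x
        - lcD (lcH κ (lcI a c)) x) := by
      simp only [lcD, lcI_H, lcD_sub, Pi.sub_apply, lcDR]
    have e2 : lcH κ (lcD c) (a :: x) = lcR κ (lcS κ a c) x
        - (lcR κ (lcI a c) x - lcR κ (lcD (lcS κ a (lcI a c))) x)
        - (lcH κ c x - lcH κ (lcD (lcI a c)) x) := by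
      have : lcH κ (lcD c) (a :: x) = lcI a (lcH κ (lcD c)) x := rfl
      rw [this, lcI_H, lcI_D, Pi.sub_apply, lcH_sub]
      have h2 : lcS κ a (c - lcD (lcI a c)) = lcS κ a c - lcS κ a (lcD (lcI a c)) := by
        simp only [lcS, ← smul_sub, ← Finset.sum_sub_distrib]; rfl
      rw [h2, lcS_D, lcR_sub, lcR_sub]; rfl
    have h := ih (lcI a c)
    rw [e1, e2, lcR_cons]
    have h' : lcD (lcH κ (lcI a c)) x = lcR κ (lcI a c) x - lcI a c x
      - lcH κ (lcD (lcI a c)) x := by rw [← h]; abel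
    rw [h']
    show _ = _ - lcI a c x
    abel

/-- Deterministic substitution. -/
theorem lcR_unit (r : G → G) (x : List G) : ∀ c : List G → W,
    lcR (ι := Unit) (fun a _ => r a) c x = c (x.map r) := by
  induction x with
  | nil => intro c; rfl
  | cons a x ih => intro c; simp [lcR, ih, lcI]

end

/-- substitution compatible with equivariance -/
theorem lcD_map (g : G → G) (x : List G) : ∀ c : List G → W,
    lcD (fun y => c (y.map g)) x = lcD c (x.map g) := by
  induction x with
  | nil => intro c; rfl
  | cons a x ih => intro c; simp only [lcD, List.map_cons]; rw [← ih]; rfl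

section
variable {ι : Type*} [Fintype ι] (κ : G → ι → G)
theorem lcR_map (g : G → G) (hg : ∀ a i, κ (g a) i = g (κ a i)) (x : List G) :
    ∀ c : List G → W, lcR κ (fun y => c (y.map g)) x = lcR κ c (x.map g) := by
  induction x with
  | nil => intro c; rfl
  | cons a x ih =>
    intro c; simp only [lcR, List.map_cons, hg]; congr 1
    refine Finset.sum_congr rfl fun i _ => ?_
    rw [← ih]; rfl

theorem lcH_map (g : G → G) (hg : ∀ a i, κ (g a) i = g (κ a i)) (x : List G) :
    ∀ c : List G → W, lcH κ (fun y => c (y.map g)) x = lcH κ c (x.map g) := by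
  induction x with
  | nil => intro c; rfl
  | cons a x ih =>
    intro c; simp only [lcH, List.map_cons, hg]
    rw [← ih]; congr 2
    refine Finset.sum_congr rfl fun i _ => ?_
    rw [← lcR_map κ g hg]; rfl

theorem lcD_lin (T : W →ₗ[ℝ] W) (x : List G) : ∀ c : List G → W,
    lcD (fun y => T (c y)) x = T (lcD c x) := by
  induction x with
  | nil => intro c; simp [lcD]
  | cons a x ih => intro c; simp only [lcD, map_sub]; rw [← ih]; rfl

theorem lcR_lin (T : W →ₗ[ℝ] W) (x : List G) : ∀ c : List G → W,
    lcR κ (fun y => T (c y)) x = T (lcR κ c x) := by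
  induction x with
  | nil => intro c; rfl
  | cons a x ih =>
    intro c; simp only [lcR, map_smul, map_sum]; congr 1
    refine Finset.sum_congr rfl fun i _ => ?_
    rw [← ih]; rfl

theorem lcH_lin (T : W →ₗ[ℝ] W) (x : List G) : ∀ c : List G → W,
    lcH κ (fun y => T (c y)) x = T (lcH κ c x) := by
  induction x with
  | nil => intro c; simp [lcH]
  | cons a x ih =>
    intro c; simp only [lcH, map_smul, map_sum, map_sub]; rw [← ih]; congr 2
    refine Finset.sum_congr rfl fun i _ => ?_
    rw [← lcR_lin]; rfl

/-- The coboundary only depends on values on sublists of length one less. -/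
theorem lcD_congr (P : G → Prop) (x : List G) : ∀ (n : ℕ) (c d : List G → W), x.length = n + 1 →
    (∀ a ∈ x, P a) → (∀ y : List G, y.length = n → (∀ a ∈ y, P a) → c y = d y) →
    lcD c x = lcD d x := by
  induction x with
  | nil => intro n c d h; simp at h
  | cons a x ih =>
    intro n c d h hP hcd
    simp only [lcD]
    have hx : x.length = n := by simpa using h
    have hPx : ∀ a ∈ x, P a := fun b hb => hP b (List.mem_cons_of_mem _ hb)
    rw [hcd x hx hPx]
    congr 1
    cases x with
    | nil => rfl
    | cons b x =>
      cases n with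
      | zero => simp at hx
      | succ n =>
        refine ih n _ _ hx hPx ?_
        intro y hy hPy
        refine hcd _ (by simp [hy]) ?_
        intro e he
        rcases List.mem_cons.1 he with rfl | he
        · exact hP e (by simp)
        · exact hPy e he

theorem lcD_const (e : W) (x : List G) :
    lcD (fun _ => e) x = if x.length % 2 = 1 then e else 0 := by
  induction x with
  | nil => simp [lcD]
  | cons a x ih =>
    have : lcD (lcI a (fun _ : List G => e)) x = lcD (fun _ => e) x := rfl
    simp only [lcD, this, ih, List.length_cons]
    rcases Nat.mod_two_eq_zero_or_one x.length with h | h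
    · rw [if_neg (by omega), if_pos (by omega), sub_zero]
    · rw [if_pos (by omega), if_neg (by omega), sub_self]

end

section
variable [Group G] {ι kap : Type*} [Fintype ι] [Fintype kap]

/-- Right random multiplication. -/
noncomputable def lcQ (y : ι → G) : (List G → W) → List G → W := lcR (fun a i => a * y i)

theorem lcQ_comp (y : ι → G) (z : kap → G) (x : List G) : ∀ c : List G → W,
    lcQ y (lcQ z c) x = lcQ (fun p : ι × kap => y p.1 * z p.2) c x := by
  induction x with
  | nil => intro c; rfl
  | cons a x ih =>
    intro c
    have e : ∀ i, lcI (a * y i) (lcQ z c) = ((Fintype.card kap : ℝ))⁻¹ • ∑ k,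
        lcQ z (lcI (a * (y i * z k)) c) := by
      intro i
      funext w
      rw [Pi.smul_apply, Finset.sum_apply]
      simp only [← mul_assoc]
      rfl
    have e1 : lcQ y (lcQ z c) (a :: x) = ((Fintype.card ι : ℝ))⁻¹ • ∑ i,
      lcRL (fun a i => a * y i) (lcI (a * y i) (lcQ z c)) x := rfl
    have e2 : lcQ (fun p : ι × kap => y p.1 * z p.2) c (a :: x) =
      ((Fintype.card (ι × kap) : ℝ))⁻¹ • ∑ p : ι × kap,
      lcQ (fun p : ι × kap => y p.1 * z p.2) (lcI (a * (y p.1 * z p.2)) c) x := rfl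
    rw [e1, e2, Fintype.sum_prod_type, Fintype.card_prod]
    push_cast
    rw [mul_inv, ← smul_smul]
    congr 1
    rw [Finset.smul_sum]
    refine Finset.sum_congr rfl fun i _ => ?_
    rw [e, map_smul, map_sum, Pi.smul_apply, Finset.sum_apply]
    congr 1
    refine Finset.sum_congr rfl fun k _ => ?_
    rw [← ih]; rfl

theorem lcQ_reindex (e : kap ≃ ι) (y : ι → G) (x : List G) : ∀ c : List G → W,
    lcQ (fun k => y (e k)) c x = lcQ y c x := by
  induction x with
  | nil => intro c; rfl
  | cons a x ih =>
    intro c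
    have e1 : lcQ y c (a :: x) = ((Fintype.card ι : ℝ))⁻¹ • ∑ i, lcQ y (lcI (a * y i) c) x := rfl
    have e2 : lcQ (fun k => y (e k)) c (a :: x) = ((Fintype.card kap : ℝ))⁻¹ • ∑ k,
      lcQ (fun k => y (e k)) (lcI (a * y (e k)) c) x := rfl
    rw [e1, e2, Fintype.card_congr e]
    congr 1
    rw [← Equiv.sum_comp e]
    exact Finset.sum_congr rfl fun i _ => ih _

/-- the closed formula for tuples -/
theorem lcQ_ofFn (y : ι → G) (N : ℕ) : ∀ (g : Fin N → G) (c : List G → W),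
    lcQ y c (List.ofFn g) = ((Fintype.card (Fin N → ι) : ℝ))⁻¹ • ∑ s : Fin N → ι,
      c (List.ofFn fun i => g i * y (s i)) := by
  induction N with
  | zero => intro g c; simp [lcQ, lcR]
  | succ N ih =>
    intro g c
    rw [List.ofFn_succ]
    have e1 : lcQ y c (g 0 :: List.ofFn fun i : Fin N => g i.succ) = ((Fintype.card ι : ℝ))⁻¹ • ∑ i,
      lcQ y (lcI (g 0 * y i) c) (List.ofFn fun i : Fin N => g i.succ) := rfl
    rw [e1]
    simp only [ih]
    rw [← Finset.smul_sum, smul_smul]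
    congr 1
    · simp [pow_succ, mul_comm]
    · rw [← Fintype.sum_prod_type']
      rw [← Equiv.sum_comp (Fin.consEquiv (fun _ : Fin (N+1) => ι))]
      refine Finset.sum_congr rfl fun p _ => ?_
      rw [List.ofFn_succ]
      simp [lcI, Fin.consEquiv]
end

section Top
variable [TopologicalSpace W] [IsTopologicalAddGroup W] [ContinuousSMul ℝ W]

theorem continuous_lcI (a : G) : Continuous (lcI a : (List G → W) → _) :=
  continuous_pi fun x => continuous_apply (a :: x)

theorem continuous_lcD : Continuous (lcD : (List G → W) → _) := by
  refine continuous_pi fun x => ?_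
  induction x with
  | nil => exact continuous_const
  | cons a x ih => exact (continuous_apply x).sub (ih.comp (continuous_lcI a))

theorem continuous_lcR {ι : Type*} [Fintype ι] (κ : G → ι → G) :
    Continuous (lcR κ : (List G → W) → _) := by
  refine continuous_pi fun x => ?_
  induction x with
  | nil => exact continuous_apply _
  | cons a x ih =>
    exact (continuous_finsetSum _ fun i _ => ih.comp (continuous_lcI (κ a i))).const_smul _
end Top

section Bound
/-- bounds in a convex symmetric set -/
theorem lcR_mem {ι : Type*} [Fintype ι] [Nonempty ι] (κ : G → ι → G) (B : Set W)
    (hB : Convex ℝ B) (x : List G) : ∀ c : List G → W, (∀ y, c y ∈ B) → lcR κ c x ∈ B := by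
  induction x with
  | nil => intro c hc; exact hc []
  | cons a x ih =>
    intro c hc
    simp only [lcR]
    rw [Finset.smul_sum]
    refine hB.sum_mem (fun i _ => by positivity) ?_ (fun i _ => ih _ fun y => hc _)
    rw [Finset.sum_const, Finset.card_univ, nsmul_eq_mul]
    exact mul_inv_cancel₀ (Nat.cast_ne_zero.2 Fintype.card_ne_zero)

theorem lcH_bound {ι : Type*} [Fintype ι] [Nonempty ι] (κ : G → ι → G) (p : Seminorm ℝ W)
    (C : ℝ) (x : List G) :
    ∀ c : List G → W, (∀ y, p (c y) ≤ C) → p (lcH κ c x) ≤ x.length * C := by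
  induction x with
  | nil => intro c hc; simp [lcH]
  | cons a x ih =>
    intro c hc
    have h2 : p (((Fintype.card ι : ℝ))⁻¹ • ∑ i, lcR κ (lcI (κ a i) (lcI a c)) x) ≤ C := by
      have := lcR_mem κ (p.closedBall 0 C) (p.convex_closedBall 0 C) (a :: x)
        (lcI a c) (fun y => by rw [Seminorm.mem_closedBall, sub_zero]; exact hc _)
      rw [Seminorm.mem_closedBall, sub_zero] at this
      exact this
    have h3 := ih (lcI a c) (fun y => hc _)
    have h4 := map_sub_le_add p (((Fintype.card ι : ℝ))⁻¹ • ∑ i, lcR κ (lcI (κ a i) (lcI a c)) x)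
      (lcH κ (lcI a c) x)
    simp only [lcH, List.length_cons]
    push_cast
    linarith
end Bound
end ListCalc

section Bessel
variable {Γ : Type*} [Group Γ] {Sg : Type*} [Fintype Sg] [Nonempty Sg]

/-- Harmonicity at a site. -/
def Harm (τ : ℤ → Sg → Γ) (j : ℤ) (ψ : Γ → ℝ) : Prop :=
  ∀ g, ψ g = ((Fintype.card Sg : ℝ))⁻¹ * ∑ s, ψ (g * τ j s)

/-- The product of the letters `s0` at the sites of `l`. -/
def zl (τ : ℤ → Sg → Γ) (s0 : Sg) (l : List ℤ) : Γ := (l.map fun j => τ j s0).prod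

theorem harm_split (τ : ℤ → Sg → Γ) (s0 : Sg) (C : ℝ) (ψ : Γ → ℝ) (hC : ∀ g, |ψ g| ≤ C)
    (l : List ℤ) (hl : ∀ j ∈ l, Harm τ j ψ) : ∀ g,
    |ψ g - ((Fintype.card Sg : ℝ))⁻¹ ^ l.length * ψ (g * zl τ s0 l)|
      ≤ (1 - ((Fintype.card Sg : ℝ))⁻¹ ^ l.length) * C := by
  classical
  induction l with
  | nil => intro g; simp [zl]
  | cons j l ih =>
    intro g
    set p : ℝ := ((Fintype.card Sg : ℝ))⁻¹ with hp
    have hcard : (0 : ℝ) < Fintype.card Sg := Nat.cast_pos.2 Fintype.card_pos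
    have hp0 : 0 < p := inv_pos.2 hcard
    have h1 : |ψ g - p * ψ (g * τ j s0)| ≤ (1 - p) * C := by
      have e : ψ g - p * ψ (g * τ j s0) = p * ∑ s ∈ Finset.univ.erase s0, ψ (g * τ j s) := by
        rw [hl j (by simp) g, ← Finset.add_sum_erase _ _ (Finset.mem_univ s0)]; ring
      rw [e, abs_mul, abs_of_pos hp0]
      have h2 : |∑ s ∈ Finset.univ.erase s0, ψ (g * τ j s)| ≤ ((Fintype.card Sg : ℝ) - 1) * C := by
        refine (Finset.abs_sum_le_sum_abs _ _).trans ?_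
        refine (Finset.sum_le_card_nsmul _ _ C fun s _ => hC _).trans ?_
        rw [Finset.card_erase_of_mem (Finset.mem_univ _), Finset.card_univ, nsmul_eq_mul,
          Nat.cast_sub Fintype.card_pos, Nat.cast_one]
      calc _ ≤ p * (((Fintype.card Sg : ℝ) - 1) * C) := by gcongr
        _ = (1 - p) * C := by rw [hp]; field_simp
    have h2 := ih (fun i hi => hl i (by simp [hi])) (g * τ j s0)
    have e : ψ g - p ^ (j :: l).length * ψ (g * zl τ s0 (j :: l)) =
        (ψ g - p * ψ (g * τ j s0)) +
        p * (ψ (g * τ j s0) - p ^ l.length * ψ (g * τ j s0 * zl τ s0 l)) := by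
      simp only [zl, List.map_cons, List.prod_cons, List.length_cons, mul_assoc, pow_succ]; ring
    rw [e]
    refine (abs_add_le _ _).trans ?_
    rw [abs_mul, abs_of_pos hp0]
    calc _ ≤ (1 - p) * C + p * ((1 - p ^ l.length) * C) := by gcongr
      _ = _ := by rw [List.length_cons, pow_succ]; ring

theorem zl_comm (τ : ℤ → Sg → Γ) (s0 : Sg)
    (hcomm : ∀ i j s s', i ≠ j → Commute (τ i s) (τ j s')) (l : List ℤ) (j : ℤ) (hj : j ∉ l)
    (s : Sg) : Commute (τ j s) (zl τ s0 l) := by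
  refine Commute.list_prod_right _ _ ?_
  intro y hy
  obtain ⟨i, hi, rfl⟩ := List.mem_map.1 hy
  exact hcomm _ _ _ _ (fun h => hj (h ▸ hi))

theorem sqrt_aux (P x a R : ℝ) (hP : 0 < P) (hP1 : P ≤ 1) (hR : 0 ≤ R) :
    P * √((x + a * ((1 - P) / P)) ^ 2 + R) + (1 - P) * √((x - a) ^ 2 + R)
      ≤ √(x ^ 2 + ((1 - P) / P * a ^ 2 + R)) := by
  set A := √((x + a * ((1 - P) / P)) ^ 2 + R) with hA
  set B := √((x - a) ^ 2 + R) with hB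
  have hA2 : A ^ 2 = (x + a * ((1 - P) / P)) ^ 2 + R := Real.sq_sqrt (by positivity)
  have hB2 : B ^ 2 = (x - a) ^ 2 + R := Real.sq_sqrt (by positivity)
  apply Real.le_sqrt_of_sq_le
  have h1 : (P * A + (1 - P) * B) ^ 2 ≤ P * A ^ 2 + (1 - P) * B ^ 2 := by
    have : P * A ^ 2 + (1 - P) * B ^ 2 - (P * A + (1 - P) * B) ^ 2 = P * (1 - P) * (A - B) ^ 2 := by
      ring
    have h2 : 0 ≤ P * (1 - P) * (A - B) ^ 2 :=
      mul_nonneg (mul_nonneg hP.le (by linarith)) (sq_nonneg _)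
    linarith
  refine h1.trans (le_of_eq ?_)
  rw [hA2, hB2]
  field_simp
  ring

theorem harm_bessel (τ : ℤ → Sg → Γ) (s0 : Sg)
    (hcomm : ∀ i j s s', i ≠ j → Commute (τ i s) (τ j s'))
    (C : ℝ) (φ : Γ → ℝ) (hC : ∀ g, |φ g| ≤ C) (hφ : ∀ j, Harm τ j φ)
    (L : ℕ → List ℤ) (w : ℕ) (hw : ∀ k, (L k).length = w)
    (hL : ∀ k k', k ≠ k' → List.Disjoint (L k) (L k')) (P : ℝ)
    (hP : P = ((Fintype.card Sg : ℝ))⁻¹ ^ w) (lam : ℕ → ℝ) (J : ℕ) : ∀ (x : ℝ) (g : Γ),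
    |x * φ g + ∑ m ∈ Finset.range J, lam m * (φ (g * zl τ s0 (L m)) - φ g)|
      ≤ C * √(x ^ 2 + (1 - P) / P * ∑ m ∈ Finset.range J, lam m ^ 2) := by
  have hcard : (1 : ℝ) ≤ Fintype.card Sg := Nat.one_le_cast.2 Fintype.card_pos
  have hP0 : 0 < P := by rw [hP]; positivity
  have hP1 : P ≤ 1 := by
    rw [hP]; exact pow_le_one₀ (by positivity) (inv_le_one_of_one_le₀ hcard)
  have hC0 : 0 ≤ C := (abs_nonneg _).trans (hC 1)
  induction J with
  | zero =>
    intro x g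
    simp only [Finset.range_zero, Finset.sum_empty, add_zero, mul_zero]
    rw [Real.sqrt_sq_eq_abs, abs_mul, mul_comm]
    exact mul_le_mul_of_nonneg_right (hC g) (abs_nonneg _)
  | succ J ih =>
    intro x g
    set Ψ : ℝ → Γ → ℝ := fun y g =>
      y * φ g + ∑ m ∈ Finset.range J, lam m * (φ (g * zl τ s0 (L m)) - φ g) with hΨ
    set R := (1 - P) / P * ∑ m ∈ Finset.range J, lam m ^ 2 with hR
    have hR0 : 0 ≤ R := mul_nonneg (div_nonneg (by linarith) hP0.le)
      (Finset.sum_nonneg fun _ _ => sq_nonneg _)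
    set a := lam J with ha
    have hharm : ∀ y, ∀ j ∈ L J, Harm τ j (Ψ y) := by
      intro y j hj g
      simp only [hΨ]
      have hz : ∀ m ∈ Finset.range J, φ (g * zl τ s0 (L m)) = ((Fintype.card Sg : ℝ))⁻¹ *
          ∑ s, φ (g * τ j s * zl τ s0 (L m)) := by
        intro m hm
        have hne : m ≠ J := (Finset.mem_range.1 hm).ne
        rw [hφ j (g * zl τ s0 (L m))]
        congr 1
        refine Finset.sum_congr rfl fun s _ => ?_
        rw [mul_assoc, mul_assoc]
        rw [(zl_comm τ s0 hcomm (L m) j (fun h => hL m J hne h hj) s).eq]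
      rw [Finset.sum_congr rfl fun m hm => by rw [hz m hm, hφ j g, ← mul_sub,
        ← Finset.sum_sub_distrib]]
      rw [hφ j g, Finset.sum_add_distrib, Finset.sum_comm]
      simp only [← Finset.mul_sum]
      rw [mul_add, Finset.mul_sum, Finset.mul_sum, Finset.mul_sum]
      simp only [Finset.mul_sum, mul_left_comm]
    have hsp := harm_split τ s0 (C * √((x - a) ^ 2 + R)) (Ψ (x - a)) (fun g => ih (x - a) g)
      (L J) (hharm _) g
    rw [hw, ← hP] at hsp
    have h2 := ih (x + a * ((1 - P) / P)) (g * zl τ s0 (L J))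
    have e : x * φ g + ∑ m ∈ Finset.range (J + 1), lam m * (φ (g * zl τ s0 (L m)) - φ g) =
        P * Ψ (x + a * ((1 - P) / P)) (g * zl τ s0 (L J)) +
        (Ψ (x - a) g - P * Ψ (x - a) (g * zl τ s0 (L J))) := by
      rw [Finset.sum_range_succ]
      simp only [hΨ]
      field_simp
      ring
    rw [e]
    refine (abs_add_le _ _).trans ?_
    rw [abs_mul, abs_of_pos hP0]
    have h3 := sqrt_aux P x a R hP0 hP1 hR0
    calc _ ≤ P * (C * √((x + a * ((1 - P) / P)) ^ 2 + R))
          + (1 - P) * (C * √((x - a) ^ 2 + R)) := by gcongr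
      _ = C * (P * √((x + a * ((1 - P) / P)) ^ 2 + R) + (1 - P) * √((x - a) ^ 2 + R)) := by ring
      _ ≤ C * √(x ^ 2 + ((1 - P) / P * a ^ 2 + R)) := by gcongr
      _ = _ := by
        rw [Finset.sum_range_succ, hR]
        congr 3; ring

theorem harm_tendsto (τ : ℤ → Sg → Γ) (s0 : Sg)
    (hcomm : ∀ i j s s', i ≠ j → Commute (τ i s) (τ j s'))
    (C : ℝ) (φ : Γ → ℝ) (hC : ∀ g, |φ g| ≤ C) (hφ : ∀ j, Harm τ j φ)
    (L : ℕ → List ℤ) (w : ℕ) (hw : ∀ k, (L k).length = w)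
    (hL : ∀ k k', k ≠ k' → List.Disjoint (L k) (L k')) (g : Γ) :
    Tendsto (fun k => φ (g * zl τ s0 (L k))) atTop (𝓝 (φ g)) := by
  set d : ℕ → ℝ := fun k => φ (g * zl τ s0 (L k)) - φ g with hd
  set P : ℝ := ((Fintype.card Sg : ℝ))⁻¹ ^ w with hP
  have hcard : (1 : ℝ) ≤ Fintype.card Sg := Nat.one_le_cast.2 Fintype.card_pos
  have hP0 : 0 < P := by rw [hP]; positivity
  have hP1 : P ≤ 1 := pow_le_one₀ (by positivity) (inv_le_one_of_one_le₀ hcard)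
  set Λ := (1 - P) / P with hΛ
  have hΛ0 : 0 ≤ Λ := div_nonneg (by linarith) hP0.le
  have hC0 : 0 ≤ C := (abs_nonneg _).trans (hC 1)
  have hb : ∀ J, ∑ m ∈ Finset.range J, d m ^ 2 ≤ C ^ 2 * Λ := by
    intro J
    have h := harm_bessel τ s0 hcomm C φ hC hφ L w hw hL P hP d J 0 g
    set Q := ∑ m ∈ Finset.range J, d m ^ 2 with hQ
    have hQ0 : 0 ≤ Q := Finset.sum_nonneg fun _ _ => sq_nonneg _
    have e : 0 * φ g + ∑ m ∈ Finset.range J, d m * (φ (g * zl τ s0 (L m)) - φ g) = Q := by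
      rw [zero_mul, zero_add]
      exact Finset.sum_congr rfl fun m _ => by simp only [hd]; ring
    rw [e, abs_of_nonneg hQ0] at h
    have h2 : Q ^ 2 ≤ (C * √(0 ^ 2 + Λ * Q)) ^ 2 := by gcongr
    rw [mul_pow, Real.sq_sqrt (by positivity)] at h2
    by_cases hz : Q = 0
    · rw [hz]; positivity
    · have hQp : 0 < Q := lt_of_le_of_ne hQ0 (Ne.symm hz)
      by_contra hcon
      push Not at hcon
      nlinarith
  have hs : Summable fun m => d m ^ 2 :=
    summable_of_sum_range_le (fun _ => sq_nonneg _) hb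
  have h0 := hs.tendsto_atTop_zero
  have h1 : Tendsto d atTop (𝓝 0) := by
    have := h0.sqrt
    simp only [Real.sqrt_sq_eq_abs, Real.sqrt_zero] at this
    exact (tendsto_zero_iff_abs_tendsto_zero d).2 this
  have h2 := h1.add_const (φ g)
  simpa [hd] using h2
end Bessel

section Baire
variable {F : Type*} [NormedAddCommGroup F] [NormedSpace ℝ F]

theorem weak_lim_norm_le (f : ℕ → WeakDual ℝ F) (e : WeakDual ℝ F) (r : ℝ)
    (hf : ∀ᶠ k in atTop, ‖WeakDual.toStrongDual (f k)‖ ≤ r)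
    (ht : ∀ v, Tendsto (fun k => f k v) atTop (𝓝 (e v))) : ‖WeakDual.toStrongDual e‖ ≤ r := by
  have hcl := WeakDual.isClosed_closedBall (𝕜 := ℝ) (E := F) 0 r
  have ht' : Tendsto f atTop (𝓝 e) := by
    rw [tendsto_iff_forall_eval_tendsto_topDualPairing]
    exact ht
  have := hcl.mem_of_tendsto ht' (hf.mono fun k hk => by simpa using hk)
  simpa using this

theorem exists_small_open (hsep : TopologicalSpace.SeparableSpace (StrongDual ℝ F))
    (A : Set (WeakDual ℝ F)) (hA : A.Nonempty) (C : ℝ)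
    (hC : ∀ a ∈ A, ‖WeakDual.toStrongDual a‖ ≤ C) (ε : ℝ) (hε : 0 < ε) :
    ∃ U : Set (WeakDual ℝ F), IsOpen U ∧ (∃ a ∈ A, a ∈ U) ∧
      ∀ a ∈ A, ∀ b ∈ A, a ∈ U → b ∈ U → ‖WeakDual.toStrongDual (a - b)‖ ≤ ε := by
  set K := closure A with hK
  have hKc : IsCompact K := by
    refine IsCompact.of_isClosed_subset (WeakDual.isCompact_closedBall (𝕜 := ℝ) 0 C)
      isClosed_closure (closure_minimal ?_ (WeakDual.isClosed_closedBall 0 C))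
    intro a ha
    simpa using hC a ha
  haveI : CompactSpace K := isCompact_iff_compactSpace.1 hKc
  haveI : Nonempty K := (hA.closure).to_subtype
  obtain ⟨D, hDc, hDd⟩ := hsep.exists_countable_dense
  haveI : Countable D := hDc.to_subtype
  let f : D → Set K := fun e =>
    Subtype.val ⁻¹' (WeakDual.toStrongDual ⁻¹' Metric.closedBall (e : StrongDual ℝ F) (ε / 2))
  have hfc : ∀ e, IsClosed (f e) := fun e =>
    (WeakDual.isClosed_closedBall _ _).preimage continuous_subtype_val
  have hfU : ⋃ e, f e = Set.univ := by
    refine Set.eq_univ_of_forall fun x => ?_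
    obtain ⟨e, heD, he⟩ := hDd.exists_dist_lt (WeakDual.toStrongDual (x : WeakDual ℝ F))
      (half_pos hε)
    refine Set.mem_iUnion.2 ⟨⟨e, heD⟩, ?_⟩
    exact he.le
  obtain ⟨e, x, hx⟩ := nonempty_interior_of_iUnion_of_closed hfc hfU
  obtain ⟨U, hUo, hU⟩ := isOpen_induced_iff.1 (isOpen_interior (s := f e))
  have hsub : ∀ a ∈ A, a ∈ U → dist (WeakDual.toStrongDual a) (e : StrongDual ℝ F) ≤ ε / 2 := by
    intro a ha haU
    have h1 : (⟨a, subset_closure ha⟩ : K) ∈ Subtype.val ⁻¹' U := haU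
    rw [hU] at h1
    have h2 : (⟨a, subset_closure ha⟩ : K) ∈ f e := interior_subset h1
    exact h2
  refine ⟨U, hUo, ?_, ?_⟩
  · have hxU : (x : WeakDual ℝ F) ∈ U := by
      have : x ∈ Subtype.val ⁻¹' U := by rw [hU]; exact hx
      exact this
    obtain ⟨a, haU, haA⟩ := mem_closure_iff.1 x.2 U hUo hxU
    exact ⟨a, haA, haU⟩
  · intro a ha b hb haU hbU
    rw [map_sub, ← dist_eq_norm]
    calc _ ≤ _ := dist_triangle_right _ _ (e : StrongDual ℝ F)
      _ ≤ ε / 2 + ε / 2 := add_le_add (hsub a ha haU) (hsub b hb hbU)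
      _ = ε := by ring

theorem ergodic_const {Γ : Type*} [Group Γ] {Sg : Type*} [Fintype Sg] [Nonempty Sg]
    (hsep : TopologicalSpace.SeparableSpace (StrongDual ℝ F))
    (τ : ℤ → Sg → Γ) (hcomm : ∀ i j s s', i ≠ j → Commute (τ i s) (τ j s'))
    (t : Γ) (ht : ∀ j s, t * τ j s = τ (j + 1) s * t)
    (d : Γ → WeakDual ℝ F) (C : ℝ) (hC : ∀ g, ‖WeakDual.toStrongDual (d g)‖ ≤ C)
    (hharm : ∀ j g, d g = ((Fintype.card Sg : ℝ))⁻¹ • ∑ s, d (g * τ j s))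
    (hR : ∀ g, d (g * t) = d g)
    (hL : ∀ g g', ‖WeakDual.toStrongDual (d (t * g) - d (t * g'))‖
      = ‖WeakDual.toStrongDual (d g - d g')‖) (s0 : Sg) :
    d (τ 0 s0) = d 1 := by
  have hφC : ∀ v g, |d g v| ≤ C * ‖v‖ := fun v g =>
    ((WeakDual.toStrongDual (d g)).le_opNorm v).trans
      (mul_le_mul_of_nonneg_right (hC g) (norm_nonneg _))
  have hφH : ∀ v j, Harm τ j (fun g => d g v) := by
    intro v j g
    show d g v = _
    conv_lhs => rw [hharm j g]
    have : ∀ (r : ℝ) (s : Finset Sg) (f : Sg → WeakDual ℝ F),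
        (r • ∑ i ∈ s, f i) v = r * ∑ i ∈ s, f i v := by
      intro r s f
      show (WeakDual.toStrongDual (r • ∑ i ∈ s, f i)) v = _
      rw [map_smul, map_sum]
      simp
    exact this _ _ _
  have hLm : ∀ (m : ℕ) g g', ‖WeakDual.toStrongDual (d (t ^ m * g) - d (t ^ m * g'))‖
      = ‖WeakDual.toStrongDual (d g - d g')‖ := by
    intro m
    induction m with
    | zero => intro g g'; simp
    | succ m ih => intro g g'; rw [pow_succ, mul_assoc, mul_assoc, ih, hL]
  have hRm : ∀ (m : ℕ) g, d (g * t ^ m) = d g := by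
    intro m
    induction m with
    | zero => intro g; simp
    | succ m ih => intro g; rw [pow_succ, ← mul_assoc, hR, ih]
  have hzt : ∀ (l : List ℤ), t * zl τ s0 l = zl τ s0 (l.map (· + 1)) * t := by
    intro l
    induction l with
    | nil => simp [zl]
    | cons j l ih =>
      simp only [zl, List.map_cons, List.prod_cons] at ih ⊢
      rw [← mul_assoc, ht, mul_assoc, ih, mul_assoc]
  have hzm : ∀ (m : ℕ) (l : List ℤ), t ^ m * zl τ s0 l = zl τ s0 (l.map (· + (m : ℤ))) * t ^ m := by
    intro m
    induction m with
    | zero => intro l; simp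
    | succ m ih =>
      intro l
      rw [pow_succ, mul_assoc, hzt, ← mul_assoc, ih, mul_assoc, List.map_map]
      congr 3
      funext j
      simp only [Function.comp_apply]
      push_cast; ring
  have key : ∀ ε : ℝ, 0 < ε → ‖WeakDual.toStrongDual (d (τ 0 s0) - d 1)‖ ≤ ε := by
    intro ε hε
    obtain ⟨U, hUo, ⟨a, ⟨l, rfl⟩, haU⟩, hU⟩ := exists_small_open hsep
      (Set.range fun l : List ℤ => d (zl τ s0 l)) ⟨_, [], rfl⟩ C
      (by rintro _ ⟨l, rfl⟩; exact hC _) ε hε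
    -- a bound for the sites of `l`
    obtain ⟨w, hw⟩ : ∃ w : ℕ, ∀ j ∈ l, |j| < w := by
      clear haU
      induction l with
      | nil => exact ⟨0, by simp⟩
      | cons j l ih =>
        obtain ⟨w, hw⟩ := ih
        refine ⟨max w (j.natAbs + 1), ?_⟩
        intro i hi
        rcases List.mem_cons.1 hi with rfl | hi
        · push_cast; rw [lt_max_iff]; right; omega
        · have := hw i hi; push_cast; rw [lt_max_iff]; left; exact this
    set q : ℕ := 2 * w + 1 with hq
    set m : ℕ → ℕ := fun k => q * (k + 1) with hm
    have hmix1 : ∀ g v, Tendsto (fun k => d (g * zl τ s0 [(m k : ℤ)]) v) atTop (𝓝 (d g v)) := by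
      intro g v
      refine harm_tendsto τ s0 hcomm (C * ‖v‖) (fun g => d g v) (hφC v) (hφH v)
        (fun k => [(m k : ℤ)]) 1 (fun k => rfl) ?_ g
      intro k k' hk
      simp only [List.disjoint_singleton, List.mem_singleton]
      intro h
      have h' : m k = m k' := by exact_mod_cast h.symm
      have := Nat.eq_of_mul_eq_mul_left (by omega : 0 < q) h'
      omega
    have hmix2 : ∀ g v, Tendsto (fun k => d (g * zl τ s0 (l.map (· - (m k : ℤ)))) v) atTop
        (𝓝 (d g v)) := by
      intro g v
      refine harm_tendsto τ s0 hcomm (C * ‖v‖) (fun g => d g v) (hφC v) (hφH v)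
        (fun k => l.map (· - (m k : ℤ))) l.length (fun k => by simp) ?_ g
      intro k k' hk x hx hx'
      obtain ⟨i, hi, hix⟩ := List.mem_map.1 hx
      obtain ⟨i', hi', hix'⟩ := List.mem_map.1 hx'
      have h1 := abs_lt.1 (hw i hi)
      have h2 := abs_lt.1 (hw i' hi')
      have h3 : (m k : ℤ) - m k' = i - i' := by linarith
      have h4 : (m k : ℤ) - m k' = q * ((k : ℤ) - k') := by simp only [hm]; push_cast; ring
      rw [h4] at h3
      have h5 : (q : ℤ) = 2 * w + 1 := by rw [hq]; push_cast; ring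
      rcases lt_or_gt_of_ne hk with h | h
      · have : (k : ℤ) - k' ≤ -1 := by omega
        nlinarith
      · have : 1 ≤ (k : ℤ) - k' := by omega
        nlinarith
    have hnear : ∀ᶠ k in atTop, d (zl τ s0 l * zl τ s0 [(m k : ℤ)]) ∈ U := by
      have : Tendsto (fun k => d (zl τ s0 l * zl τ s0 [(m k : ℤ)])) atTop (𝓝 (d (zl τ s0 l))) := by
        rw [tendsto_iff_forall_eval_tendsto_topDualPairing]
        exact fun v => hmix1 _ v
      exact this.eventually (hUo.mem_nhds haU)
    have hsmall : ∀ᶠ k in atTop, ‖WeakDual.toStrongDual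
        (d (τ 0 s0 * zl τ s0 (l.map (· - (m k : ℤ)))) - d (1 * zl τ s0 (l.map (· - (m k : ℤ)))))‖
          ≤ ε := by
      filter_upwards [hnear] with k hk
      have hz : zl τ s0 l * zl τ s0 [(m k : ℤ)] = zl τ s0 (l ++ [(m k : ℤ)]) := by
        simp [zl]
      have h1 := hU _ ⟨l ++ [(m k : ℤ)], rfl⟩ _ ⟨l, rfl⟩ (by simpa only [hz] using hk) haU
      have hcomm0 : τ 0 s0 * zl τ s0 (l.map (· - (m k : ℤ))) =
          zl τ s0 (l.map (· - (m k : ℤ)) ++ [0]) := by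
        have h0 : (0 : ℤ) ∉ l.map (· - (m k : ℤ)) := by
          intro h
          obtain ⟨i, hi, hix⟩ := List.mem_map.1 h
          have h1 := abs_lt.1 (hw i hi)
          have h5 : (m k : ℤ) = (2 * w + 1) * (k + 1) := by simp only [hm, hq]; push_cast; ring
          have h6 : (0 : ℤ) ≤ (2 * w + 1) * k := by positivity
          nlinarith
        rw [(zl_comm τ s0 hcomm _ 0 h0 s0).eq]
        simp [zl]
      rw [hcomm0, one_mul, ← hLm (m k), hzm, hzm, hRm, hRm]
      simpa [List.map_map, Function.comp_def] using h1
    refine weak_lim_norm_le _ _ ε hsmall ?_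
    intro v
    have h1 := (hmix2 (τ 0 s0) v).sub (hmix2 1 v)
    exact h1
  have h0 : ‖WeakDual.toStrongDual (d (τ 0 s0) - d 1)‖ ≤ 0 :=
    le_of_forall_pos_le_add fun ε hε => by simpa using key ε hε
  have h1 : WeakDual.toStrongDual (d (τ 0 s0) - d 1) = 0 := norm_le_zero_iff.1 h0
  rw [LinearEquiv.map_eq_zero_iff] at h1
  exact sub_eq_zero.1 h1
end Baire

section Abs
variable {F : Type*} [NormedAddCommGroup F] [NormedSpace ℝ F]

/-- The dual norm, as a seminorm on the weak dual. -/
noncomputable def wn : Seminorm ℝ (WeakDual ℝ F) :=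
  (normSeminorm ℝ (StrongDual ℝ F)).comp (WeakDual.toStrongDual (𝕜 := ℝ) (E := F)).toLinearMap

theorem wn_apply (φ : WeakDual ℝ F) : wn φ = ‖WeakDual.toStrongDual φ‖ := rfl

theorem wn_ball_eq (r : ℝ) : {φ : WeakDual ℝ F | wn φ ≤ r} =
    WeakDual.toStrongDual ⁻¹' Metric.closedBall (0 : StrongDual ℝ F) r := by
  ext φ; simp [wn_apply]

variable {G : Type} [Group G]

/-- Pointwise bounded cochains. -/
def bbox (B : List G → ℝ) : Set (List G → WeakDual ℝ F) := {c | ∀ x, wn (c x) ≤ B x}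

theorem bbox_eq (B : List G → ℝ) : (bbox B : Set (List G → WeakDual ℝ F)) =
    Set.univ.pi fun x => WeakDual.toStrongDual ⁻¹' Metric.closedBall (0 : StrongDual ℝ F) (B x) := by
  ext c
  simp only [← wn_ball_eq, Set.mem_pi, Set.mem_univ, true_imp_iff, bbox, Set.mem_ofPred_eq]

theorem bbox_compact (B : List G → ℝ) : IsCompact (bbox B : Set (List G → WeakDual ℝ F)) := by
  rw [bbox_eq]
  exact isCompact_univ_pi fun x => WeakDual.isCompact_closedBall _ _

theorem bbox_closed (B : List G → ℝ) : IsClosed (bbox B : Set (List G → WeakDual ℝ F)) :=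
  (bbox_compact B).isClosed

theorem bbox_convex (B : List G → ℝ) : Convex ℝ (bbox B : Set (List G → WeakDual ℝ F)) := by
  have h : (bbox B : Set (List G → WeakDual ℝ F)) = Set.univ.pi fun x => wn.closedBall 0 (B x) := by
    ext c; simp [bbox, Set.mem_pi, Seminorm.mem_closedBall]
  rw [h]
  exact convex_pi fun x _ => wn.convex_closedBall 0 (B x)

/-- Equivariant cochains. -/
def eqv (π : G → WeakDual ℝ F →L[ℝ] WeakDual ℝ F) (P : Set G) : Set (List G → WeakDual ℝ F) :=
  {c | ∀ g ∈ P, ∀ x : List G, c (x.map (g * ·)) = π g (c x)}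

variable (π : G → WeakDual ℝ F →L[ℝ] WeakDual ℝ F)

theorem eqv_closed (P : Set G) : IsClosed (eqv π P) := by
  have : eqv π P = ⋂ g ∈ P, ⋂ x : List G, {c | c (x.map (g * ·)) = π g (c x)} := by
    ext c; simp [eqv]
  rw [this]
  refine isClosed_biInter fun g _ => isClosed_iInter fun x => isClosed_eq (continuous_apply _) ?_
  exact (π g).continuous.comp (continuous_apply _)

theorem eqv_convex (P : Set G) : Convex ℝ (eqv π P) := by
  intro a ha b hb s t _ _ _ g hg x
  simp only [Pi.add_apply, Pi.smul_apply, ha g hg x, hb g hg x, map_add, map_smul]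

theorem eqv_sub (P : Set G) {a b} (ha : a ∈ eqv π P) (hb : b ∈ eqv π P) : a - b ∈ eqv π P := by
  intro g hg x
  simp only [Pi.sub_apply, ha g hg x, hb g hg x, map_sub]

theorem eqv_add (P : Set G) {a b} (ha : a ∈ eqv π P) (hb : b ∈ eqv π P) : a + b ∈ eqv π P := by
  intro g hg x
  simp only [Pi.add_apply, ha g hg x, hb g hg x, map_add]

theorem eqv_lcD (P : Set G) {a} (ha : a ∈ eqv π P) : lcD a ∈ eqv π P := by
  intro g hg x
  rw [← lcD_map]
  have : (fun y : List G => a (y.map (g * ·))) = fun y => (π g).toLinearMap (a y) :=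
    funext fun y => ha g hg y
  rw [this, lcD_lin]; rfl

theorem eqv_lcR {ι : Type*} [Fintype ι] (κ : G → ι → G) (P : Set G)
    (hκ : ∀ g ∈ P, ∀ a i, κ (g * a) i = g * κ a i) {a} (ha : a ∈ eqv π P) :
    lcR κ a ∈ eqv π P := by
  intro g hg x
  rw [← lcR_map κ _ (hκ g hg)]
  have : (fun y : List G => a (y.map (g * ·))) = fun y => (π g).toLinearMap (a y) :=
    funext fun y => ha g hg y
  rw [this, lcR_lin]; rfl

theorem eqv_lcH {ι : Type*} [Fintype ι] (κ : G → ι → G) (P : Set G)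
    (hκ : ∀ g ∈ P, ∀ a i, κ (g * a) i = g * κ a i) {a} (ha : a ∈ eqv π P) :
    lcH κ a ∈ eqv π P := by
  intro g hg x
  rw [← lcH_map κ _ (hκ g hg)]
  have : (fun y : List G => a (y.map (g * ·))) = fun y => (π g).toLinearMap (a y) :=
    funext fun y => ha g hg y
  rw [this, lcH_lin]; rfl

/-- The linear continuous operator of right random multiplication. -/
noncomputable def lcQC {ι : Type*} [Fintype ι] (y : ι → G) :
    (List G → WeakDual ℝ F) →L[ℝ] (List G → WeakDual ℝ F) :=
  ⟨lcRL (fun a i => a * y i), continuous_lcR _⟩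

theorem lcQC_apply {ι : Type*} [Fintype ι] (y : ι → G) (c : List G → WeakDual ℝ F) :
    lcQC y c = lcQ y c := rfl

/-- The orbit set. -/
def Oc (c : List G → WeakDual ℝ F) : Set (List G → WeakDual ℝ F) :=
  {d | ∃ (ι : Type) (_ : Fintype ι) (_ : Nonempty ι) (y : ι → G), d = lcQ y c}

/-- The closed convex hull of the orbit set. -/
def Xc (c : List G → WeakDual ℝ F) : Set (List G → WeakDual ℝ F) := closure (convexHull ℝ (Oc c))

theorem Xc_convex (c : List G → WeakDual ℝ F) : Convex ℝ (Xc c) := (convex_convexHull ℝ _).closure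

theorem Xc_closed (c : List G → WeakDual ℝ F) : IsClosed (Xc c) := isClosed_closure

theorem Xc_min (c : List G → WeakDual ℝ F) (T : Set (List G → WeakDual ℝ F)) (h : Oc c ⊆ T)
    (hT : Convex ℝ T) (hT' : IsClosed T) : Xc c ⊆ T :=
  closure_minimal (convexHull_min h hT) hT'

theorem Oc_sub (c : List G → WeakDual ℝ F) : Oc c ⊆ Xc c :=
  (subset_convexHull ℝ _).trans subset_closure

theorem Xc_nonempty (c : List G → WeakDual ℝ F) : (Xc c).Nonempty :=
  ⟨_, Oc_sub c ⟨Unit, inferInstance, inferInstance, fun _ => 1, rfl⟩⟩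

theorem Xc_map (c : List G → WeakDual ℝ F) {ι : Type} [Fintype ι] [Nonempty ι] (z : ι → G) :
    ∀ d ∈ Xc c, lcQC z d ∈ Xc c := by
  have := Xc_min c ((lcQC z) ⁻¹' Xc c) ?_ ((Xc_convex c).linear_preimage (lcQC z).toLinearMap)
    ((Xc_closed c).preimage (lcQC z).continuous)
  · exact fun d hd => this hd
  · rintro _ ⟨κ, _, _, y, rfl⟩
    refine Oc_sub c ⟨ι × κ, inferInstance, inferInstance, fun p => z p.1 * y p.2, ?_⟩
    funext x
    exact lcQ_comp z y x c

theorem Xc_bbox (c : List G → WeakDual ℝ F) (C : ℝ) (hc : ∀ x, wn (c x) ≤ C) :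
    Xc c ⊆ bbox fun _ => C := by
  refine Xc_min c _ ?_ (bbox_convex _) (bbox_closed _)
  rintro _ ⟨κ, _, _, y, rfl⟩ x
  have := lcR_mem (fun a i => a * y i) (wn.closedBall 0 C) (wn.convex_closedBall 0 C) x c
    (fun y => by rw [Seminorm.mem_closedBall, sub_zero]; exact hc _)
  rw [Seminorm.mem_closedBall, sub_zero] at this
  exact this

theorem Xc_compact (c : List G → WeakDual ℝ F) (C : ℝ) (hc : ∀ x, wn (c x) ≤ C) :
    IsCompact (Xc c) := (bbox_compact _).of_isClosed_subset (Xc_closed c) (Xc_bbox c C hc)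

theorem Xc_eqv (c : List G → WeakDual ℝ F) (hc : c ∈ eqv π Set.univ) : Xc c ⊆ eqv π Set.univ := by
  refine Xc_min c _ ?_ (eqv_convex _ _) (eqv_closed _ _)
  rintro _ ⟨κ, _, _, y, rfl⟩
  exact eqv_lcR π (fun a i => a * y i) _ (fun g _ a i => mul_assoc _ _ _) hc

theorem Xc_cyc (c : List G → WeakDual ℝ F) (hc : lcD c = 0) : Xc c ⊆ {d | lcD d = 0} := by
  refine Xc_min c _ ?_ ?_ (isClosed_eq continuous_lcD continuous_const)
  · rintro _ ⟨κ, _, _, y, rfl⟩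
    show lcD (lcR (fun a i => a * y i) c) = 0
    funext x
    rw [lcDR, hc]
    exact congrFun (map_zero (lcRL (fun a i => a * y i))) x
  · intro a ha b hb s t _ _ _
    show lcDL (s • a + t • b) = 0
    have ha' : lcDL a = 0 := ha
    have hb' : lcDL b = 0 := hb
    rw [map_add, map_smul, map_smul, ha', hb']; simp

theorem Xc_homotopic (c : List G → WeakDual ℝ F) (C : ℝ) (hC : ∀ x, wn (c x) ≤ C)
    (hc : c ∈ eqv π Set.univ) (hD : lcD c = 0) (d) (hd : d ∈ Xc c) :
    ∃ h ∈ bbox (fun x : List G => x.length * C) ∩ eqv π Set.univ, d = c + lcD h := by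
  set T := (fun h => c + lcD h) '' (bbox (fun x : List G => x.length * C) ∩ eqv π Set.univ) with hT
  have hTc : IsCompact T := ((bbox_compact _).inter_right (eqv_closed _ _)).image
    (continuous_const.add continuous_lcD)
  have hTv : Convex ℝ T := by
    have : T = (fun h => c + h) '' (lcDL '' (bbox (fun x : List G => x.length * C) ∩ eqv π Set.univ)) := by
      rw [Set.image_image]; rfl
    rw [this]
    exact (((bbox_convex _).inter (eqv_convex _ _)).linear_image lcDL).translate c
  have hsub : Xc c ⊆ T := by
    refine Xc_min c _ ?_ hTv hTc.isClosed
    rintro _ ⟨κ, _, _, y, rfl⟩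
    refine ⟨lcH (fun a i => a * y i) c, ⟨fun x => lcH_bound _ wn C x c hC, ?_⟩, ?_⟩
    · exact eqv_lcH π (fun a i => a * y i) _ (fun g _ a i => mul_assoc _ _ _) hc
    · funext x
      have h1 := lc_homotopy (fun a i => a * y i) x c
      rw [hD] at h1
      have h2 : lcH (fun a i => a * y i) (0 : List G → WeakDual ℝ F) x = 0 :=
        congrFun (map_zero (lcHL (fun a i => a * y i))) x
      rw [h2, add_zero] at h1
      show c x + lcD _ x = lcR (fun a i => a * y i) c x
      rw [h1]; abel
  obtain ⟨h, hh, rfl⟩ := hsub hd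
  exact ⟨h, hh, rfl⟩
end Abs

section Abs2
variable {F : Type*} [NormedAddCommGroup F] [NormedSpace ℝ F] {G : Type} [Group G]
  (π : G → WeakDual ℝ F →L[ℝ] WeakDual ℝ F)

theorem fix_finite (hsep : TopologicalSpace.SeparableSpace (StrongDual ℝ F))
    (hπ : ∀ g φ, wn (π g φ) = wn φ)
    (c : List G → WeakDual ℝ F) (C : ℝ) (hC : ∀ x, wn (c x) ≤ C)
    (hc : c ∈ eqv π Set.univ) (N : ℕ) (S : Finset G) (h1S : 1 ∈ S) (t : G)
    (ht : ∀ i j : ℤ, i ≠ j → ∀ s ∈ S, ∀ s' ∈ S,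
      Commute (t ^ i * s * t ^ (-i)) (t ^ j * s' * t ^ (-j))) :
    ∃ d ∈ Xc c, ∀ u : Fin N → G, (∀ i, u i ∈ S) →
      d (List.ofFn u) = d (List.ofFn fun _ : Fin N => (1 : G)) := by
  haveI : Nonempty S := ⟨⟨1, h1S⟩⟩
  let q : ℤ → S → G := fun j s => t ^ j * s * t ^ (-j)
  have hq : ∀ j s, t * q j s = q (j + 1) s * t := by
    intro j s
    simp only [q]
    group
  let A : ℤ → (List G → WeakDual ℝ F) →L[ℝ] (List G → WeakDual ℝ F) := fun j => lcQC (q j)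
  have hA : ∀ i j d, A i (A j d) = A j (A i d) := by
    intro i j d
    rcases eq_or_ne i j with rfl | hij
    · rfl
    · simp only [A, lcQC_apply]
      funext x
      rw [lcQ_comp, lcQ_comp, ← lcQ_reindex (Equiv.prodComm S S)]
      congr 1
      congr 1
      funext p
      exact (ht i j hij _ p.2.2 _ p.1.2).eq
  let X1 : Set (List G → WeakDual ℝ F) := Xc c ∩ ⋂ j, {x | A j x = x}
  have hX1c : IsCompact X1 := (Xc_compact c C hC).inter_right
    (isClosed_iInter fun j => isClosed_eq (A j).continuous continuous_id)
  have hX1v : Convex ℝ X1 := by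
    refine (Xc_convex c).inter (convex_iInter fun j => ?_)
    intro a ha b hb s t _ _ _
    have ha' : A j a = a := ha
    have hb' : A j b = b := hb
    show A j (s • a + t • b) = s • a + t • b
    rw [map_add, map_smul, map_smul, ha', hb']
  have hX1n : X1.Nonempty := by
    obtain ⟨x, hx, h⟩ := mk_family (Xc c) (Xc_compact c C hC) (Xc_convex c) (Xc_nonempty c) A
      (fun i => Xc_map c (q i)) (fun i j x _ => hA i j x)
    exact ⟨x, hx, Set.mem_iInter.2 h⟩
  let R : (List G → WeakDual ℝ F) →L[ℝ] (List G → WeakDual ℝ F) := lcQC fun _ : Unit => t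
  have hRX : ∀ x ∈ X1, R x ∈ X1 := by
    rintro d ⟨hd, hd'⟩
    refine ⟨Xc_map c _ d hd, Set.mem_iInter.2 fun j => ?_⟩
    have h1 : A (j - 1) d = d := Set.mem_iInter.1 hd' (j - 1)
    have h2 : A j (R d) = R (A (j - 1) d) := by
      simp only [A, R, lcQC_apply]
      funext x
      rw [lcQ_comp, lcQ_comp, ← lcQ_reindex (Equiv.prodComm Unit S)]
      congr 1
      congr 1
      funext p
      have := hq (j - 1) p.2
      rw [sub_add_cancel] at this
      exact this.symm
    show A j (R d) = R d
    rw [h2, h1]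
  obtain ⟨d, ⟨hdX, hdA⟩, hdR⟩ := mk_single X1 hX1c hX1v hX1n R hRX
  refine ⟨d, hdX, fun u hu => ?_⟩
  have hde := Xc_eqv π c hc hdX
  have := ergodic_const (Γ := Fin N → G) (Sg := Fin N → S) hsep
    (fun j s i => q j (s i)) (fun i j s s' hij => ?_) (fun _ => t) ?_
    (fun g => d (List.ofFn g)) C (fun g => Xc_bbox c C hC hdX _) ?_ ?_ ?_ (fun i => ⟨u i, hu i⟩)
  · simpa [q, Pi.one_def] using this
  · funext k
    exact (ht i j hij _ (s k).2 _ (s' k).2).eq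
  · intro j s
    funext k
    exact hq j (s k)
  · intro j g
    have h1 : A j d = d := Set.mem_iInter.1 hdA j
    conv_lhs => rw [← h1]
    exact lcQ_ofFn (q j) N g d
  · intro g
    conv_rhs => rw [← hdR]
    have := lcR_unit (fun a => a * t) (List.ofFn g) d
    rw [List.map_ofFn] at this
    exact this.symm
  · intro g g'
    have e : ∀ g : Fin N → G, d (List.ofFn ((fun _ => t) * g)) = π t (d (List.ofFn g)) := by
      intro g
      rw [← hde t trivial, List.map_ofFn]; rfl
    rw [e, e, ← map_sub]
    exact hπ _ _

theorem fix_all (hsep : TopologicalSpace.SeparableSpace (StrongDual ℝ F))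
    (hπ : ∀ g φ, wn (π g φ) = wn φ)
    (c : List G → WeakDual ℝ F) (C : ℝ) (hC : ∀ x, wn (c x) ≤ C)
    (hc : c ∈ eqv π Set.univ) (N : ℕ) (K : Subgroup G)
    (hK : ∀ S : Finset G, (∀ s ∈ S, s ∈ K) → ∃ t : G, ∀ i j : ℤ, i ≠ j → ∀ s ∈ S, ∀ s' ∈ S,
      Commute (t ^ i * s * t ^ (-i)) (t ^ j * s' * t ^ (-j))) :
    ∃ d ∈ Xc c, ∀ u : Fin N → G, (∀ i, u i ∈ K) →
      d (List.ofFn u) = d (List.ofFn fun _ : Fin N => (1 : G)) := by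
  classical
  have h := (Xc_compact c C hC).inter_iInter_nonempty
    (fun u : {u : Fin N → G // ∀ i, u i ∈ K} =>
      {d : List G → WeakDual ℝ F | d (List.ofFn u.1) = d (List.ofFn fun _ : Fin N => (1 : G))})
    (fun u => isClosed_eq (continuous_apply _) (continuous_apply _)) ?_
  · obtain ⟨d, hd, hd'⟩ := h
    exact ⟨d, hd, fun u hu => Set.mem_iInter.1 hd' ⟨u, hu⟩⟩
  · intro U
    let S : Finset G := insert 1 (U.biUnion fun u => Finset.univ.image u.1)
    have hS : ∀ s ∈ S, s ∈ K := by
      intro s hs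
      rcases Finset.mem_insert.1 hs with rfl | hs
      · exact K.one_mem
      · obtain ⟨u, _, hu⟩ := Finset.mem_biUnion.1 hs
        obtain ⟨i, _, rfl⟩ := Finset.mem_image.1 hu
        exact u.2 i
    obtain ⟨t, ht⟩ := hK S hS
    obtain ⟨d, hd, hd'⟩ := fix_finite π hsep hπ c C hC hc N S (Finset.mem_insert_self _ _) t ht
    refine ⟨d, hd, Set.mem_iInter₂.2 fun u hu => hd' u.1 fun i => ?_⟩
    exact Finset.mem_insert_of_mem (Finset.mem_biUnion.2
      ⟨u, hu, Finset.mem_image.2 ⟨i, Finset.mem_univ _, rfl⟩⟩)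
end Abs2

section Abs3
variable {F : Type*} [NormedAddCommGroup F] [NormedSpace ℝ F] {G : Type} [Group G]
  (π : G → WeakDual ℝ F →L[ℝ] WeakDual ℝ F)

theorem map_map_mul (g h : G) (x : List G) :
    (x.map (g * ·)).map (h * ·) = x.map ((h * g) * ·) := by
  rw [List.map_map]
  congr 1
  funext a
  simp [mul_assoc]

theorem map_one_mul (x : List G) : x.map ((1 : G) * ·) = x := by simp

theorem exists_section (K : Subgroup G) [K.Normal] :
    ∃ r : G → G, (∀ a, r a ∈ K) ∧ ∀ k ∈ K, ∀ a, r (k * a) = k * r a := by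
  refine ⟨fun a => a * ((a : G ⧸ K).out)⁻¹, fun a => ?_, fun k hk a => ?_⟩
  · rw [← QuotientGroup.eq_one_iff]
    simp
  · have : ((k * a : G) : G ⧸ K) = (a : G ⧸ K) := by
      rw [QuotientGroup.mk_mul, (QuotientGroup.eq_one_iff k).2 hk, one_mul]
    simp only [this, mul_assoc]

theorem exists_K_primitive (hsep : TopologicalSpace.SeparableSpace (StrongDual ℝ F))
    (hπ : ∀ g φ, wn (π g φ) = wn φ)
    (c : List G → WeakDual ℝ F) (C : ℝ) (hC : ∀ x, wn (c x) ≤ C)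
    (hc : c ∈ eqv π Set.univ) (hD : lcD c = 0) (N : ℕ) (K : Subgroup G) [K.Normal]
    (hK : ∀ S : Finset G, (∀ s ∈ S, s ∈ K) → ∃ t : G, ∀ i j : ℤ, i ≠ j → ∀ s ∈ S, ∀ s' ∈ S,
      Commute (t ^ i * s * t ^ (-i)) (t ^ j * s' * t ^ (-j))) :
    ∃ D : ℝ, ∃ b ∈ bbox (fun x : List G => D + x.length * C + x.length * C) ∩ eqv π K,
      ∀ x : List G, x.length = N → lcD b x = c x := by
  obtain ⟨d, hd, hdc⟩ := fix_all π hsep hπ c C hC hc N K hK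
  obtain ⟨h, ⟨hhb, hhe⟩, hdh⟩ := Xc_homotopic π c C hC hc hD d hd
  have hde := Xc_eqv π c hc hd
  have hdD : lcD d = 0 := Xc_cyc c hD hd
  have hdC := Xc_bbox c C hC hd
  obtain ⟨r, hrK, hr⟩ := exists_section K
  set e := d (List.ofFn fun _ : Fin N => (1 : G)) with he
  have hdx : ∀ x : List G, x.length = N → (∀ a ∈ x, a ∈ K) → d x = e := by
    intro x hx hxK
    obtain ⟨u, rfl⟩ : ∃ u : Fin N → G, x = List.ofFn u := by
      subst hx; exact ⟨x.get, (List.ofFn_get x).symm⟩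
    exact hdc u fun i => hxK _ (List.mem_ofFn.2 ⟨i, rfl⟩)
  have hek : ∀ k ∈ K, π k e = e := by
    intro k hk
    rw [he, ← hde k trivial]
    exact hdx _ (by simp) (by simp; intro _; exact hk)
  have hconst : ∀ x : List G, x.length = N → lcD (fun _ => e) x = e := by
    intro x hx
    rw [lcD_const, hx]
    split_ifs with hN
    · rfl
    · have h1 : lcD d (List.replicate (N + 1) 1) = 0 := congrFun hdD _
      rw [lcD_congr (· ∈ K) _ N d (fun _ => e) (by simp)
        (by intro a ha; rw [List.eq_of_mem_replicate ha]; exact K.one_mem)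
        hdx, lcD_const, List.length_replicate, if_pos (by omega)] at h1
      exact h1.symm
  set κ : G → Unit → G := fun a _ => r a with hκ
  refine ⟨wn e, (fun _ => e) - lcH κ d - h, ⟨?_, ?_⟩, ?_⟩
  · intro x
    have h1 := lcH_bound κ wn C x d hdC
    have h2 := hhb x
    have h3 := map_sub_le_add wn (e - lcH κ d x) (h x)
    have h4 := map_sub_le_add wn e (lcH κ d x)
    simp only [Pi.sub_apply]
    linarith
  · refine eqv_sub π _ (eqv_sub π _ ?_ ?_) ?_
    · intro k hk x
      exact (hek k hk).symm
    · exact eqv_lcH π κ _ (fun g hg a i => hr g hg a) (fun g hg x => hde g trivial x)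
    · exact fun g hg x => hhe g trivial x
  · intro x hx
    have h1 := lc_homotopy κ x d
    rw [hdD] at h1
    have h2 : lcH κ (0 : List G → WeakDual ℝ F) x = 0 := congrFun (map_zero (lcHL κ)) x
    rw [h2, add_zero, lcR_unit, hdx (x.map r) (by simpa using hx)
      (by intro a ha; obtain ⟨b, _, rfl⟩ := List.mem_map.1 ha; exact hrK b)] at h1
    rw [lcD_sub, lcD_sub, Pi.sub_apply, Pi.sub_apply, hconst x hx, h1]
    rw [hdh, Pi.add_apply]
    abel

/-- The action on cochains. -/
noncomputable def actC (g : G) : (List G → WeakDual ℝ F) →L[ℝ] (List G → WeakDual ℝ F) :=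
  ContinuousLinearMap.pi fun x => (π g).comp (ContinuousLinearMap.proj (x.map (g⁻¹ * ·)))

theorem actC_apply (g : G) (b : List G → WeakDual ℝ F) (x : List G) :
    actC π g b x = π g (b (x.map (g⁻¹ * ·))) := rfl

theorem exists_primitive (hsep : TopologicalSpace.SeparableSpace (StrongDual ℝ F))
    (hπ : ∀ g φ, wn (π g φ) = wn φ) (hπ1 : ∀ φ, π 1 φ = φ)
    (hπm : ∀ g h φ, π (g * h) φ = π g (π h φ))
    (c : List G → WeakDual ℝ F) (C : ℝ) (hC : ∀ x, wn (c x) ≤ C)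
    (hc : c ∈ eqv π Set.univ) (hD : lcD c = 0) (N : ℕ) (K : Subgroup G) [K.Normal]
    (hcom : ∀ g h : G, g * h * g⁻¹ * h⁻¹ ∈ K)
    (hK : ∀ S : Finset G, (∀ s ∈ S, s ∈ K) → ∃ t : G, ∀ i j : ℤ, i ≠ j → ∀ s ∈ S, ∀ s' ∈ S,
      Commute (t ^ i * s * t ^ (-i)) (t ^ j * s' * t ^ (-j))) :
    ∃ D : ℝ, ∃ b ∈ bbox (fun x : List G => D + x.length * C + x.length * C) ∩ eqv π Set.univ,
      ∀ x : List G, x.length = N → lcD b x = c x := by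
  obtain ⟨D, b0, ⟨hb0, hb0e⟩, hb0D⟩ := exists_K_primitive π hsep hπ c C hC hc hD N K hK
  set Bx : List G → ℝ := fun x => D + x.length * C + x.length * C with hBx
  let X : Set (List G → WeakDual ℝ F) := bbox Bx ∩ eqv π K ∩ {b | ∀ x, x.length = N → lcD b x = c x}
  have hXc : IsCompact X := by
    refine ((bbox_compact _).inter_right (eqv_closed _ _)).inter_right ?_
    have : {b : List G → WeakDual ℝ F | ∀ x, x.length = N → lcD b x = c x} =
        ⋂ x : List G, ⋂ _ : x.length = N, {b | lcD b x = c x} := by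
      ext b; simp
    rw [this]
    exact isClosed_iInter fun x => isClosed_iInter fun _ =>
      isClosed_eq ((continuous_apply x).comp continuous_lcD) continuous_const
  have hXv : Convex ℝ X := by
    refine ((bbox_convex _).inter (eqv_convex _ _)).inter ?_
    intro a ha b hb s t _ _ hst x hx
    rw [lcD_add, lcD_smul, lcD_smul, ha x hx, hb x hx, ← add_smul, hst, one_smul]
  have hfix : ∃ x ∈ X, ∀ g, actC π g x = x := by
    refine mk_family X hXc hXv ⟨b0, ⟨hb0, hb0e⟩, hb0D⟩ (actC π) ?_ ?_
    · rintro g b ⟨⟨hb, hbe⟩, hbD⟩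
      refine ⟨⟨?_, ?_⟩, ?_⟩
      · intro x
        rw [actC_apply, hπ]
        have := hb (x.map (g⁻¹ * ·))
        simpa [hBx] using this
      · intro k hk x
        rw [actC_apply, actC_apply, map_map_mul]
        have e : g⁻¹ * k = (g⁻¹ * k * g) * g⁻¹ := by group
        have hk' : g⁻¹ * k * g ∈ K := by
          have := ‹K.Normal›.conj_mem k hk g⁻¹
          simpa using this
        rw [e, ← map_map_mul, hbe _ hk', ← hπm, ← hπm]
        congr 2
        group
      · intro x hx
        have e : actC π g b = fun y => (π g).toLinearMap ((fun y => b (y.map (g⁻¹ * ·))) y) := rfl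
        rw [e, lcD_lin, lcD_map, hbD _ (by simpa using hx)]
        show π g (c _) = c x
        rw [← hc g trivial, map_map_mul, mul_inv_cancel, map_one_mul]
    · rintro g h b ⟨⟨hb, hbe⟩, hbD⟩
      funext x
      rw [actC_apply, actC_apply, actC_apply, actC_apply, map_map_mul, map_map_mul, ← hπm, ← hπm]
      have hk : g⁻¹ * h⁻¹ * g * h ∈ K := by
        have := hcom g⁻¹ h⁻¹
        simpa using this
      have e1 : h⁻¹ * g⁻¹ = (g⁻¹ * h⁻¹ * g * h)⁻¹ * (g⁻¹ * h⁻¹) := by group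
      rw [e1, ← map_map_mul, hbe _ (K.inv_mem hk), ← hπm]
      congr 2
      group
  obtain ⟨b, ⟨⟨hb, _⟩, hbD⟩, hbfix⟩ := hfix
  refine ⟨D, b, ⟨hb, ?_⟩, hbD⟩
  intro g _ x
  have := congrFun (hbfix g) (x.map (g * ·))
  rw [actC_apply, map_map_mul, inv_mul_cancel, map_one_mul] at this
  exact this.symm
end Abs3

section Trans
variable {G : Type*} [Group G] {E : Type*} [AddCommGroup E] [Module ℝ E]

/-- successive differences -/
def ldf : G → List G → List G
  | _, [] => []
  | a, b :: x => (a⁻¹ * b) :: ldf b x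

/-- partial products -/
def lpp : G → List G → List G
  | _, [] => []
  | a, b :: x => (a * b) :: lpp (a * b) x

/-- the part of the inhomogeneous differential not involving the action -/
def lcM : (List G → E) → List G → E
  | _, [] => 0
  | f, [_] => f []
  | f, g :: g2 :: l => f (g * g2 :: l) - lcM (lcI g f) (g2 :: l)

theorem ldf_length (x : List G) : ∀ a : G, (ldf a x).length = x.length := by
  induction x with
  | nil => intro a; rfl
  | cons b x ih => intro a; simp [ldf, ih]

theorem lpp_length (x : List G) : ∀ a : G, (lpp a x).length = x.length := by
  induction x with
  | nil => intro a; rfl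
  | cons b x ih => intro a; simp [lpp, ih]

theorem ldf_lpp (x : List G) : ∀ a : G, ldf a (lpp a x) = x := by
  induction x with
  | nil => intro a; rfl
  | cons b x ih => intro a; simp [ldf, lpp, ih]

theorem lpp_ldf (a : G) (x : List G) : ∀ e : G, (lpp e (ldf (a * e) x)).map (a * ·) = x := by
  induction x with
  | nil => intro e; rfl
  | cons b x ih =>
    intro e
    have h1 : e * ((a * e)⁻¹ * b) = a⁻¹ * b := by group
    have h2 : a * (a⁻¹ * b) = b := by group
    have := ih (a⁻¹ * b)
    rw [h2] at this
    simp only [ldf, lpp, h1, List.map_cons, h2, this]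

theorem ldf_smul (g : G) (x : List G) : ∀ a : G, ldf (g * a) (x.map (g * ·)) = ldf a x := by
  induction x with
  | nil => intro a; rfl
  | cons b x ih =>
    intro a
    have h1 : (g * a)⁻¹ * (g * b) = a⁻¹ * b := by group
    simp only [List.map_cons, ldf, ih, h1]

theorem lcD_ldf (x : List G) : ∀ (a b : G) (f : List G → E),
    lcD (fun y => f (ldf a y)) (b :: x) = lcM f (a⁻¹ * b :: ldf b x) := by
  induction x with
  | nil => intro a b f; simp [lcD, lcM, ldf]
  | cons b2 x ih =>
    intro a b f
    have e1 : lcD (fun y => f (ldf a y)) (b :: b2 :: x) = f (ldf a (b2 :: x)) -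
      lcD (fun y => (lcI (a⁻¹ * b) f) (ldf b y)) (b2 :: x) := rfl
    rw [e1, ih]
    simp only [ldf, lcM]
    congr 3
    group

/-- homogenization -/
def lhom (π : G → E →ₗ[ℝ] E) (f : List G → E) : List G → E
  | [] => 0
  | a :: x => π a (f (ldf a x))

/-- inhomogeneous differential on lists -/
def ldel (π : G → E →ₗ[ℝ] E) (f : List G → E) : List G → E
  | [] => 0
  | g :: l => π g (f l) - lcM f (g :: l)

variable (π : G → E →ₗ[ℝ] E)

theorem lcD_lhom (hπm : ∀ g h φ, π (g * h) φ = π g (π h φ)) (f : List G → E) (a b : G)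
    (x : List G) : lcD (lhom π f) (a :: b :: x) = π a (ldel π f (ldf a (b :: x))) := by
  have e1 : lcD (lhom π f) (a :: b :: x) = π b (f (ldf b x)) -
    lcD (fun y => π a ((fun y => f (ldf a y)) y)) (b :: x) := rfl
  rw [e1, lcD_lin, lcD_ldf]
  simp only [ldf, ldel, map_sub]
  rw [← hπm, mul_inv_cancel_left]

theorem lcM_fin (n : ℕ) : ∀ (F : List G → E) (g : Fin (n + 1) → G),
    (∑ i : Fin n, ((-1 : ℝ) ^ ((i : ℕ) + 1)) •
      F (List.ofFn fun j : Fin n => if (j : ℕ) < (i : ℕ) then g (Fin.castSucc j)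
        else if (j : ℕ) = (i : ℕ) then g (Fin.castSucc j) * g j.succ
        else g j.succ)) +
    ((-1 : ℝ) ^ (n + 1)) • F (List.ofFn fun j : Fin n => g (Fin.castSucc j)) =
      - lcM F (List.ofFn g) := by
  induction n with
  | zero => intro F g; simp [lcM]
  | succ n ih =>
    intro F g
    have h := ih (lcI (g 0) F) (fun j => g j.succ)
    rw [Fin.sum_univ_succ]
    have e0 : List.ofFn g = g 0 :: g 1 :: List.ofFn fun j : Fin n => g j.succ.succ := by
      rw [List.ofFn_succ, List.ofFn_succ]; rfl
    have e1 : (List.ofFn fun j : Fin (n + 1) => g j.succ) =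
        g 1 :: List.ofFn fun j : Fin n => g j.succ.succ := by
      rw [List.ofFn_succ]; rfl
    rw [e0, lcM, ← e1, neg_sub, ← neg_neg (lcM _ _), ← h]
    have t0 : ((-1 : ℝ) ^ (((0 : Fin (n + 1)) : ℕ) + 1)) •
        F (List.ofFn fun j : Fin (n + 1) => if (j : ℕ) < ((0 : Fin (n + 1)) : ℕ) then
          g (Fin.castSucc j) else if (j : ℕ) = ((0 : Fin (n + 1)) : ℕ) then
          g (Fin.castSucc j) * g j.succ else g j.succ) =
        - F (g 0 * g 1 :: List.ofFn fun j : Fin n => g j.succ.succ) := by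
      rw [List.ofFn_succ]
      simp
    have t1 : ∀ i : Fin n, ((-1 : ℝ) ^ (((i.succ : Fin (n + 1)) : ℕ) + 1)) •
        F (List.ofFn fun j : Fin (n + 1) => if (j : ℕ) < ((i.succ : Fin (n + 1)) : ℕ) then
          g (Fin.castSucc j) else if (j : ℕ) = ((i.succ : Fin (n + 1)) : ℕ) then
          g (Fin.castSucc j) * g j.succ else g j.succ) =
        - (((-1 : ℝ) ^ ((i : ℕ) + 1)) • lcI (g 0) F
          (List.ofFn fun j : Fin n => if (j : ℕ) < (i : ℕ) then g (Fin.castSucc j).succ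
            else if (j : ℕ) = (i : ℕ) then g (Fin.castSucc j).succ * g j.succ.succ
            else g j.succ.succ)) := by
      intro i
      rw [List.ofFn_succ, ← neg_smul]
      congr 1
      · rw [Fin.val_succ, pow_succ _ ((i : ℕ) + 1)]; ring
      · simp [lcI]
    have t2 : ((-1 : ℝ) ^ (n + 1 + 1)) • F (List.ofFn fun j : Fin (n + 1) => g (Fin.castSucc j)) =
        - (((-1 : ℝ) ^ (n + 1)) • lcI (g 0) F (List.ofFn fun j : Fin n => g (Fin.castSucc j).succ)) := by
      rw [List.ofFn_succ, ← neg_smul]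
      congr 1
      · rw [pow_succ _ (n + 1)]; ring
    rw [t0, t2, Finset.sum_congr rfl fun i _ => t1 i, Finset.sum_neg_distrib]
    abel
end Trans

section Trans2
variable {F : Type*} [NormedAddCommGroup F] [NormedSpace ℝ F] {G : Type} [Group G]

theorem bddDelta_list (π : G → StrongDual ℝ F →ₗ[ℝ] StrongDual ℝ F) (n : ℕ)
    (Φ : List G → StrongDual ℝ F) (g : Fin (n + 1) → G) :
    bddDelta (fun a φ => π a φ) n (fun h => Φ (List.ofFn h)) g = ldel π Φ (List.ofFn g) := by
  have h := lcM_fin n Φ g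
  unfold bddDelta
  rw [add_assoc, h]
  conv_rhs => rw [List.ofFn_succ]
  rw [List.ofFn_succ] 
  simp only [ldel]
  abel

/-- the contragredient action, linear version -/
noncomputable def cgL (ρ : G →* (F ≃ₗᵢ[ℝ] F)) (g : G) : StrongDual ℝ F →ₗ[ℝ] StrongDual ℝ F where
  toFun := contragredient ρ g
  map_add' _ _ := rfl
  map_smul' _ _ := rfl

theorem cgL_apply (ρ : G →* (F ≃ₗᵢ[ℝ] F)) (g : G) (φ : StrongDual ℝ F) (v : F) :
    cgL ρ g φ v = φ (ρ g⁻¹ v) := rfl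

theorem cgL_mul (ρ : G →* (F ≃ₗᵢ[ℝ] F)) (g h : G) (φ : StrongDual ℝ F) :
    cgL ρ (g * h) φ = cgL ρ g (cgL ρ h φ) := by
  ext v; simp only [cgL_apply, mul_inv_rev, map_mul]; rfl

theorem cgL_one (ρ : G →* (F ≃ₗᵢ[ℝ] F)) (φ : StrongDual ℝ F) : cgL ρ 1 φ = φ := by
  ext v; simp only [cgL_apply, inv_one, map_one]; rfl

theorem cgL_norm_le (ρ : G →* (F ≃ₗᵢ[ℝ] F)) (g : G) (φ : StrongDual ℝ F) :
    ‖cgL ρ g φ‖ ≤ ‖φ‖ := by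
  refine ContinuousLinearMap.opNorm_le_bound _ (norm_nonneg _) fun v => ?_
  rw [cgL_apply]
  exact (φ.le_opNorm _).trans (by rw [LinearIsometryEquiv.norm_map])

theorem cgL_norm (ρ : G →* (F ≃ₗᵢ[ℝ] F)) (g : G) (φ : StrongDual ℝ F) :
    ‖cgL ρ g φ‖ = ‖φ‖ := by
  refine le_antisymm (cgL_norm_le ρ g φ) ?_
  have := cgL_norm_le ρ g⁻¹ (cgL ρ g φ)
  rwa [← cgL_mul, inv_mul_cancel, cgL_one] at this

/-- the contragredient action on the weak dual -/
noncomputable def cgW (ρ : G →* (F ≃ₗᵢ[ℝ] F)) (g : G) : WeakDual ℝ F →L[ℝ] WeakDual ℝ F where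
  toLinearMap := (StrongDual.toWeakDual (𝕜 := ℝ) (E := F)).toLinearMap ∘ₗ cgL ρ g ∘ₗ
    (WeakDual.toStrongDual (𝕜 := ℝ) (E := F)).toLinearMap
  cont := WeakDual.continuous_of_continuous_eval fun v => WeakDual.eval_continuous (ρ g⁻¹ v)

theorem cgW_apply (ρ : G →* (F ≃ₗᵢ[ℝ] F)) (g : G) (φ : WeakDual ℝ F) :
    WeakDual.toStrongDual (cgW ρ g φ) = cgL ρ g (WeakDual.toStrongDual φ) := rfl

theorem lcD_lin2 {W W' : Type*} [AddCommGroup W] [Module ℝ W] [AddCommGroup W'] [Module ℝ W']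
    (T : W →ₗ[ℝ] W') (x : List G) : ∀ c : List G → W,
    lcD (fun y => T (c y)) x = T (lcD c x) := by
  induction x with
  | nil => intro c; simp [lcD]
  | cons a x ih => intro c; simp only [lcD, map_sub]; rw [← ih]; rfl

theorem vanish_of_K (hsep : TopologicalSpace.SeparableSpace (StrongDual ℝ F))
    (ρ : G →* (F ≃ₗᵢ[ℝ] F)) (K : Subgroup G) [K.Normal]
    (hcom : ∀ g h : G, g * h * g⁻¹ * h⁻¹ ∈ K)
    (hK : ∀ S : Finset G, (∀ s ∈ S, s ∈ K) → ∃ t : G, ∀ i j : ℤ, i ≠ j → ∀ s ∈ S, ∀ s' ∈ S,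
      Commute (t ^ i * s * t ^ (-i)) (t ^ j * s' * t ^ (-j))) :
    HbVanish (contragredient ρ) := by
  intro n f hf hδ
  obtain ⟨C0, hC0⟩ := hf
  obtain ⟨C, hC, hCp⟩ : ∃ C, (∀ g, ‖f g‖ ≤ C) ∧ 0 ≤ C :=
    ⟨max C0 0, fun g => (hC0 g).trans (le_max_left _ _), le_max_right _ _⟩
  -- extension of `f` to lists
  let Φ : List G → StrongDual ℝ F := fun l =>
    if h : l.length = n + 1 then f (fun i => l.get (i.cast h.symm)) else 0
  have hΦf : ∀ g : Fin (n + 1) → G, Φ (List.ofFn g) = f g := by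
    intro g
    have hl : (List.ofFn g).length = n + 1 := List.length_ofFn
    simp only [Φ]
    rw [dif_pos hl]
    congr 1
    funext i
    rw [List.get_ofFn]
    rfl
  have hΦ0 : ∀ l, l.length ≠ n + 1 → Φ l = 0 := fun l hl => dif_neg hl
  have hΦC : ∀ l, ‖Φ l‖ ≤ C := by
    intro l
    simp only [Φ]
    split_ifs
    · exact hC _
    · simpa using hCp
  let c : List G → StrongDual ℝ F := lhom (cgL ρ) Φ
  have hcC : ∀ x, ‖c x‖ ≤ C := by
    intro x
    cases x with
    | nil => simpa [c, lhom] using hCp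
    | cons a x => simp only [c, lhom, cgL_norm]; exact hΦC _
  have hce : ∀ g (x : List G), c (x.map (g * ·)) = cgL ρ g (c x) := by
    intro g x
    cases x with
    | nil => simp [c, lhom]
    | cons a x => simp only [c, lhom, List.map_cons, ldf_smul, cgL_mul]
  have hc0 : ∀ x : List G, x.length ≠ n + 2 → c x = 0 := by
    intro x hx
    cases x with
    | nil => rfl
    | cons a x =>
      simp only [c, lhom]
      rw [hΦ0, map_zero]
      rw [ldf_length]
      simpa using hx
  have hcD : lcD c = 0 := by
    funext x
    by_cases hx : x.length = n + 3
    · obtain ⟨a, b, y, rfl⟩ : ∃ a b y, x = a :: b :: y := by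
        match x, hx with
        | a :: b :: y, _ => exact ⟨a, b, y, rfl⟩
      simp only [c]
      rw [lcD_lhom _ (cgL_mul ρ)]
      have hl : (ldf a (b :: y)).length = n + 1 + 1 := by
        rw [ldf_length]; simpa using hx
      generalize ldf a (b :: y) = l at hl
      obtain ⟨g, rfl⟩ : ∃ g : Fin (n + 1 + 1) → G, l = List.ofFn g := by
        rw [← hl]; exact ⟨l.get, (List.ofFn_get l).symm⟩
      rw [← bddDelta_list]
      simp only [hΦf]
      have h1 : bddDelta (fun a φ => cgL ρ a φ) (n + 1) (fun h => f h) g = 0 := congrFun hδ g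
      rw [h1, map_zero]; rfl
    · cases x with
      | nil => rfl
      | cons a x =>
        rw [lcD_congr (fun _ => True) (a :: x) x.length c 0 rfl (by simp)]
        · exact congrFun (map_zero (lcDL : (List G → StrongDual ℝ F) →ₗ[ℝ] _)) (a :: x)
        · intro y hy _
          refine hc0 y fun h => hx ?_
          simp only [List.length_cons]
          omega
  -- the homogeneous primitive
  obtain ⟨D, b, ⟨hbB, hbe⟩, hbD⟩ := exists_primitive (cgW ρ) hsep
    (fun g φ => cgL_norm ρ g _) (fun φ => cgL_one ρ _) (fun g h φ => cgL_mul ρ g h _)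
    (fun x => StrongDual.toWeakDual (c x)) C hcC (fun g _ x => hce g x)
    (by
      funext x
      have := lcD_lin2 (StrongDual.toWeakDual (𝕜 := ℝ) (E := F)).toLinearMap x c
      rw [hcD] at this
      exact this) (n + 2) K hcom hK
  let β : List G → StrongDual ℝ F := fun l => WeakDual.toStrongDual (b (1 :: lpp 1 l))
  have hβ : ∀ x : List G, x ≠ [] → lhom (cgL ρ) β x = WeakDual.toStrongDual (b x) := by
    intro x hx
    cases x with
    | nil => exact absurd rfl hx
    | cons a x =>
      have h1 := hbe a trivial (1 :: lpp 1 (ldf a x))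
      have h2 := lpp_ldf a x 1
      rw [mul_one] at h2
      rw [List.map_cons, mul_one, h2] at h1
      rw [h1]
      rfl
  refine ⟨fun h => β (List.ofFn h), ⟨D + (n + 1 : ℕ) * C + (n + 1 : ℕ) * C, fun g => ?_⟩, ?_⟩
  · have := hbB (1 :: lpp 1 (List.ofFn g))
    simp only [List.length_cons, lpp_length, List.length_ofFn] at this
    exact this
  · funext g
    have h1 : bddDelta (fun a φ => cgL ρ a φ) n (fun h => β (List.ofFn h)) g =
      ldel (cgL ρ) β (List.ofFn g) := bddDelta_list _ _ _ _
    refine h1.trans ?_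
    set x : List G := 1 :: lpp 1 (List.ofFn g) with hx
    have hxl : x.length = n + 2 := by simp [hx, lpp_length]
    have h2 : lcD (lhom (cgL ρ) β) x = cgL ρ 1 (ldel (cgL ρ) β (List.ofFn g)) := by
      obtain ⟨b', y, hy⟩ : ∃ b y, lpp 1 (List.ofFn g) = b :: y := by
        rw [List.ofFn_succ]; exact ⟨_, _, rfl⟩
      rw [hx, hy, lcD_lhom _ (cgL_mul ρ), ← hy, ldf_lpp]
    have h3 : lcD (lhom (cgL ρ) β) x = lcD (fun x => WeakDual.toStrongDual (b x)) x := by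
      refine lcD_congr (fun _ => True) x (n + 1) _ _ hxl (by simp) ?_
      intro y hy _
      exact hβ y (by rintro rfl; simp at hy)
    have h4 : lcD (fun x => WeakDual.toStrongDual (b x)) x = c x := by
      have := lcD_lin2 (WeakDual.toStrongDual (𝕜 := ℝ) (E := F)).toLinearMap x b
      rw [hbD x hxl] at this
      exact this
    have h5 : c x = f g := by
      simp only [c, hx, lhom, ldf_lpp, hΦf, cgL_one]
    rw [← h5, ← h4, ← h3, h2, cgL_one]
end Trans2

section Thompson

/-- The unit interval. -/
abbrev UI := ↥(Set.Icc (0 : ℝ) 1)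

theorem thompson_mono {f : Equiv.Perm UI} (hf : IsThompson f) : StrictMono f :=
  fun _ _ h => hf.1 h

/-- the underlying function of the generator -/
noncomputable def x0f (x : ℝ) : ℝ := min (2 * x) (min (x + 1 / 4) ((x + 1) / 2))

/-- the inverse of the generator -/
noncomputable def x0g (x : ℝ) : ℝ := max (x / 2) (max (x - 1 / 4) (2 * x - 1))

theorem x0f_cases (x : ℝ) : (x ≤ 1 / 4 ∧ x0f x = 2 * x) ∨ (1 / 4 ≤ x ∧ x ≤ 1 / 2 ∧ x0f x = x + 1 / 4) ∨
    (1 / 2 ≤ x ∧ x0f x = (x + 1) / 2) := by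
  unfold x0f
  rcases le_total x (1 / 4) with h | h
  · left; refine ⟨h, ?_⟩
    rw [min_eq_left]; rw [le_min_iff]; constructor <;> linarith
  · rcases le_total x (1 / 2) with h' | h'
    · right; left; refine ⟨h, h', ?_⟩
      rw [min_eq_left (by linarith : x + 1 / 4 ≤ (x + 1) / 2), min_eq_right (by linarith)]
    · right; right; refine ⟨h', ?_⟩
      rw [min_eq_right (by linarith : (x + 1) / 2 ≤ x + 1 / 4), min_eq_right (by linarith)]

theorem x0g_cases (x : ℝ) : (x ≤ 1 / 2 ∧ x0g x = x / 2) ∨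
    (1 / 2 ≤ x ∧ x ≤ 3 / 4 ∧ x0g x = x - 1 / 4) ∨ (3 / 4 ≤ x ∧ x0g x = 2 * x - 1) := by
  unfold x0g
  rcases le_total x (1 / 2) with h | h
  · left; refine ⟨h, ?_⟩
    rw [max_eq_left]; rw [max_le_iff]; constructor <;> linarith
  · rcases le_total x (3 / 4) with h' | h'
    · right; left; refine ⟨h, h', ?_⟩
      rw [max_eq_left (by linarith : 2 * x - 1 ≤ x - 1 / 4), max_eq_right (by linarith)]
    · right; right; refine ⟨h', ?_⟩
      rw [max_eq_right (by linarith : x - 1 / 4 ≤ 2 * x - 1), max_eq_right (by linarith)]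

/-- the generator of Thompson's group -/
noncomputable def x0 : Equiv.Perm UI where
  toFun x := ⟨x0f x, by
    have h1 := x.2.1
    have h2 := x.2.2
    rcases x0f_cases x with h | h | h <;> constructor <;> linarith⟩
  invFun x := ⟨x0g x, by
    have h1 := x.2.1
    have h2 := x.2.2
    rcases x0g_cases x with h | h | h <;> constructor <;> linarith⟩
  left_inv x := by
    apply Subtype.ext
    show x0g (x0f x) = x
    rcases x0f_cases x with h | h | h <;> rcases x0g_cases (x0f x) with h' | h' | h' <;> linarith
  right_inv x := by
    apply Subtype.ext
    show x0f (x0g x) = x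
    rcases x0g_cases x with h | h | h <;> rcases x0f_cases (x0g x) with h' | h' | h' <;> linarith

theorem x0_val (x : UI) : ((x0 x : UI) : ℝ) = x0f x := rfl

theorem x0_thompson : IsThompson x0 := by
  refine ⟨?_, {1 / 4, 1 / 2}, ?_, ?_⟩
  · intro x y hxy
    have hxy' : (x : ℝ) < y := hxy
    show x0f x < x0f y
    rcases x0f_cases x with h | h | h <;> rcases x0f_cases y with h' | h' | h' <;> linarith
  · intro q hq
    simp only [Finset.mem_insert, Finset.mem_singleton] at hq
    rcases hq with rfl | rfl
    · exact ⟨1, 2, by norm_num⟩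
    · exact ⟨1, 1, by norm_num⟩
  · intro x y hxy hs
    have h1 := hs (1 / 4) (by simp)
    have h2 := hs (1 / 2) (by simp)
    simp only [Set.mem_Ioo, not_and, not_lt] at h1 h2
    simp only [x0_val]
    rcases lt_or_ge (x : ℝ) (1 / 4) with hx | hx
    · have hy := h1 hx
      refine ⟨1, fun t ht => ?_⟩
      have := ht.1
      have := ht.2
      rw [zpow_one]
      rcases x0f_cases x with h | h | h <;> rcases x0f_cases t with h' | h' | h' <;> linarith
    · rcases lt_or_ge (x : ℝ) (1 / 2) with hx' | hx'
      · have hy := h2 hx'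
        refine ⟨0, fun t ht => ?_⟩
        have := ht.1
        have := ht.2
        rw [zpow_zero]
        rcases x0f_cases x with h | h | h <;> rcases x0f_cases t with h' | h' | h' <;> linarith
      · refine ⟨-1, fun t ht => ?_⟩
        have := ht.1
        have := ht.2
        rw [zpow_neg, zpow_one]
        rcases x0f_cases x with h | h | h <;> rcases x0f_cases t with h' | h' | h' <;> linarith

theorem x0_ge (x : UI) : x ≤ x0 x := by
  show (x : ℝ) ≤ x0f x
  have h1 := x.2.1
  have h2 := x.2.2
  rcases x0f_cases x with h | h | h <;> linarith

theorem pow_ge {t : Equiv.Perm UI} (ht : ∀ x, x ≤ t x) (n : ℕ) (x : UI) : x ≤ (t ^ n) x := by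
  induction n with
  | zero => simp
  | succ n ih => rw [pow_succ', Equiv.Perm.mul_apply]; exact ih.trans (ht _)

theorem x0_push (p q : UI) (hp : (0 : ℝ) < p) (hq : (q : ℝ) < 1) : ∃ m : ℕ, q < (x0 ^ m) p := by
  by_contra hcon
  push Not at hcon
  obtain ⟨c, hc, hc1, hc2, hc3⟩ : ∃ c : ℝ, 0 < c ∧ c ≤ p ∧ c ≤ 1 / 4 ∧ c ≤ (1 - q) / 2 :=
    ⟨min (p : ℝ) (min (1 / 4) ((1 - q) / 2)), by
      refine lt_min hp (lt_min (by norm_num) (by linarith)), min_le_left _ _,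
      (min_le_right _ _).trans (min_le_left _ _), (min_le_right _ _).trans (min_le_right _ _)⟩
  have key : ∀ m : ℕ, (p : ℝ) + m * c ≤ ((x0 ^ m) p : UI) := by
    intro m
    induction m with
    | zero => simp
    | succ m ih =>
      rw [pow_succ', Equiv.Perm.mul_apply, x0_val]
      have h1 : (((x0 ^ m) p : UI) : ℝ) ≤ q := hcon m
      have h2 : (p : ℝ) ≤ ((x0 ^ m) p : UI) := pow_ge x0_ge m p
      rw [Nat.cast_succ]
      rcases x0f_cases ((x0 ^ m) p : UI) with h | h | h <;> linarith
  obtain ⟨m, hm⟩ := exists_nat_gt (1 / c)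
  rw [div_lt_iff₀ hc] at hm
  have h1 := key m
  have h2 := ((x0 ^ m) p).2.2
  linarith

theorem thompson_zero {f : Equiv.Perm UI} (hf : IsThompson f) :
    ∃ p : UI, (0 : ℝ) < p ∧ ∃ m : ℤ, ∀ x ≤ p, (f x : ℝ) = (2 : ℝ) ^ m * x := by
  obtain ⟨hm, s, -, hs⟩ := hf
  let z : UI := ⟨0, by norm_num, by norm_num⟩
  have hfz : (f z : ℝ) = 0 := by
    refine le_antisymm ?_ (f z).2.1
    have h1 : z ≤ f.symm z := (f.symm z).2.1
    have h2 := hm.monotone h1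
    simp only [Equiv.apply_symm_apply] at h2
    exact h2
  obtain ⟨p, hp0, hp1, hps⟩ : ∃ p : ℝ, 0 < p ∧ p ≤ 1 ∧ ∀ q ∈ s, q ∉ Set.Ioo 0 p := by
    clear hs
    induction s using Finset.induction_on with
    | empty => exact ⟨1, by norm_num, le_rfl, by simp⟩
    | insert a s _ ih =>
      obtain ⟨p, hp0, hp1, hps⟩ := ih
      by_cases ha : 0 < a
      · refine ⟨min p a, lt_min hp0 ha, (min_le_left _ _).trans hp1, ?_⟩
        intro q hq hq'
        rcases Finset.mem_insert.1 hq with rfl | hq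
        · exact absurd hq'.2 (not_lt.2 (min_le_right _ _))
        · exact hps q hq ⟨hq'.1, hq'.2.trans_le (min_le_left _ _)⟩
      · refine ⟨p, hp0, hp1, ?_⟩
        intro q hq hq'
        rcases Finset.mem_insert.1 hq with rfl | hq
        · exact ha hq'.1
        · exact hps q hq hq'
  let P : UI := ⟨p, hp0.le, hp1⟩
  obtain ⟨m, hm⟩ := hs z P hp0.le hps
  refine ⟨P, hp0, m, fun x hx => ?_⟩
  rw [hm x ⟨x.2.1, hx⟩, hfz]
  show 0 + (2 : ℝ) ^ m * ((x : ℝ) - 0) = _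
  ring

theorem thompson_one {f : Equiv.Perm UI} (hf : IsThompson f) :
    ∃ p : UI, (p : ℝ) < 1 ∧ ∃ m : ℤ, ∀ x ≥ p, 1 - (f x : ℝ) = (2 : ℝ) ^ m * (1 - x) := by
  obtain ⟨hm, s, -, hs⟩ := hf
  let z : UI := ⟨1, by norm_num, by norm_num⟩
  have hfz : (f z : ℝ) = 1 := by
    refine le_antisymm (f z).2.2 ?_
    have h1 : f.symm z ≤ z := (f.symm z).2.2
    have h2 := hm.monotone h1
    simp only [Equiv.apply_symm_apply] at h2
    exact h2
  obtain ⟨p, hp0, hp1, hps⟩ : ∃ p : ℝ, p < 1 ∧ 0 ≤ p ∧ ∀ q ∈ s, q ∉ Set.Ioo p 1 := by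
    clear hs
    induction s using Finset.induction_on with
    | empty => exact ⟨0, by norm_num, le_rfl, by simp⟩
    | insert a s _ ih =>
      obtain ⟨p, hp0, hp1, hps⟩ := ih
      by_cases ha : a < 1
      · refine ⟨max p a, max_lt hp0 ha, hp1.trans (le_max_left _ _), ?_⟩
        intro q hq hq'
        rcases Finset.mem_insert.1 hq with rfl | hq
        · exact absurd hq'.1 (not_lt.2 (le_max_right _ _))
        · exact hps q hq ⟨(le_max_left _ _).trans_lt hq'.1, hq'.2⟩
      · refine ⟨p, hp0, hp1, ?_⟩
        intro q hq hq'
        rcases Finset.mem_insert.1 hq with rfl | hq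
        · exact ha hq'.2
        · exact hps q hq hq'
  let P : UI := ⟨p, hp1, hp0.le⟩
  obtain ⟨m, hm⟩ := hs P z hp0.le hps
  refine ⟨P, hp0, m, fun x hx => ?_⟩
  have h1 := hm z ⟨hp0.le, le_rfl⟩
  rw [hfz] at h1
  rw [hm x ⟨hx, x.2.2⟩]
  have h2 : (1 : ℝ) = (f P : ℝ) + (2 : ℝ) ^ m * (1 - (P : ℝ)) := h1
  linarith

theorem commute_of_fix {s b : Equiv.Perm UI} (hs : StrictMono s) (hb : StrictMono b) (q : UI)
    (h1 : ∀ x, q ≤ x → s x = x) (h2 : ∀ x, x ≤ q → b x = x) : Commute s b := by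
  apply Equiv.ext
  intro x
  rw [Equiv.Perm.mul_apply, Equiv.Perm.mul_apply]
  rcases le_total x q with hx | hx
  · rw [h2 x hx, h2]
    rw [← h1 q le_rfl]; exact hs.monotone hx
  · rw [h1 x hx, h1]
    rw [← h2 q le_rfl]; exact hb.monotone hx

/-- being the identity near the endpoints -/
def NearId (f : Equiv.Perm UI) : Prop :=
  ∃ p q : UI, (0 : ℝ) < p ∧ (q : ℝ) < 1 ∧ (∀ x ≤ p, f x = x) ∧ ∀ x ≥ q, f x = x

variable (H : Subgroup (Equiv.Perm UI))

/-- the subgroup of elements with support inside the open interval -/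
def kerF : Subgroup H where
  carrier := {f | NearId f.1}
  one_mem' := ⟨⟨1 / 2, by norm_num, by norm_num⟩, ⟨1 / 2, by norm_num, by norm_num⟩,
    by norm_num, by norm_num, fun _ _ => rfl, fun _ _ => rfl⟩
  mul_mem' := by
    rintro f g ⟨p, q, hp, hq, h1, h2⟩ ⟨p', q', hp', hq', h1', h2'⟩
    refine ⟨min p p', max q q', ?_, ?_, fun x hx => ?_, fun x hx => ?_⟩
    · rcases min_choice p p' with h | h <;> rw [h] <;> assumption
    · rcases max_choice q q' with h | h <;> rw [h] <;> assumption
    · have ha := le_min_iff.1 hx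
      show f.1 (g.1 x) = x
      rw [h1' x ha.2, h1 x ha.1]
    · have ha := max_le_iff.1 hx
      show f.1 (g.1 x) = x
      rw [h2' x ha.2, h2 x ha.1]
  inv_mem' := by
    rintro f ⟨p, q, hp, hq, h1, h2⟩
    refine ⟨p, q, hp, hq, fun x hx => ?_, fun x hx => ?_⟩
    · show (f.1)⁻¹ x = x
      rw [Equiv.Perm.inv_eq_iff_eq, h1 x hx]
    · show (f.1)⁻¹ x = x
      rw [Equiv.Perm.inv_eq_iff_eq, h2 x hx]

theorem pos_image {g : Equiv.Perm UI} (hg : StrictMono g) {p : UI} (hp : (0 : ℝ) < p) :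
    (0 : ℝ) < g p := by
  have h : (⟨0, by norm_num, by norm_num⟩ : UI) < p := hp
  exact lt_of_le_of_lt (g _).2.1 (hg h)

theorem lt_one_image {g : Equiv.Perm UI} (hg : StrictMono g) {p : UI} (hp : (p : ℝ) < 1) :
    (g p : ℝ) < 1 := by
  have h : p < (⟨1, by norm_num, by norm_num⟩ : UI) := hp
  exact lt_of_lt_of_le (hg h) (g _).2.2

theorem inv_le_of {g : Equiv.Perm UI} (hg : StrictMono g) {x p : UI} (h : x ≤ g p) :
    g⁻¹ x ≤ p := by
  rw [← hg.le_iff_le]; simpa using h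

theorem le_inv_of {g : Equiv.Perm UI} (hg : StrictMono g) {x p : UI} (h : g p ≤ x) :
    p ≤ g⁻¹ x := by
  rw [← hg.le_iff_le]; simpa using h

theorem inv_mono {g : Equiv.Perm UI} (hg : StrictMono g) : StrictMono (g⁻¹ : Equiv.Perm UI) := by
  intro x y h
  rw [← hg.lt_iff_lt]; simpa using h

theorem conj_fix {g f : Equiv.Perm UI} {x : UI} (h : f (g⁻¹ x) = g⁻¹ x) : (g * f * g⁻¹) x = x := by
  rw [Equiv.Perm.mul_apply, Equiv.Perm.mul_apply, h]; simp

theorem kerF_normal (hH : ∀ f, f ∈ H ↔ IsThompson f) : (kerF H).Normal := by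
  refine ⟨?_⟩
  rintro f ⟨p, q, hp, hq, h1, h2⟩ g
  have hg := thompson_mono ((hH _).1 g.2)
  refine ⟨g.1 p, g.1 q, pos_image hg hp, lt_one_image hg hq, fun x hx => ?_, fun x hx => ?_⟩
  · exact conj_fix (h1 _ (inv_le_of hg hx))
  · exact conj_fix (h2 _ (le_inv_of hg hx))

theorem comm_fix {g h : Equiv.Perm UI} {x y : UI} (hxy : h (g y) = x) (hc : g (h y) = h (g y)) :
    (g * h * g⁻¹ * h⁻¹) x = x := by
  subst hxy
  simpa [Equiv.Perm.mul_apply] using hc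

theorem min_pos' {p q : UI} (hp : (0 : ℝ) < p) (hq : (0 : ℝ) < q) : (0 : ℝ) < (min p q : UI) := by
  rcases min_choice p q with h | h <;> rw [h] <;> assumption

theorem max_lt' {p q : UI} (hp : (p : ℝ) < 1) (hq : (q : ℝ) < 1) : ((max p q : UI) : ℝ) < 1 := by
  rcases max_choice p q with h | h <;> rw [h] <;> assumption

theorem kerF_comm (hH : ∀ f, f ∈ H ↔ IsThompson f) (g h : H) :
    g * h * g⁻¹ * h⁻¹ ∈ kerF H := by
  have tg := (hH _).1 g.2
  have th := (hH _).1 h.2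
  have hg := thompson_mono tg
  have hh := thompson_mono th
  obtain ⟨p, hp, m, hpm⟩ := thompson_zero tg
  obtain ⟨p', hp', m', hpm'⟩ := thompson_zero th
  obtain ⟨q, hq, n, hqn⟩ := thompson_one tg
  obtain ⟨q', hq', n', hqn'⟩ := thompson_one th
  let P : UI := min (min p p') (min (g.1⁻¹ p') (h.1⁻¹ p))
  let Q : UI := max (max q q') (max (g.1⁻¹ q') (h.1⁻¹ q))
  have hP : (0 : ℝ) < P := min_pos' (min_pos' hp hp')
    (min_pos' (pos_image (inv_mono hg) hp') (pos_image (inv_mono hh) hp))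
  have hQ : (Q : ℝ) < 1 := max_lt' (max_lt' hq hq')
    (max_lt' (lt_one_image (inv_mono hg) hq') (lt_one_image (inv_mono hh) hq))
  refine ⟨h.1 (g.1 P), h.1 (g.1 Q), pos_image hh (pos_image hg hP),
    lt_one_image hh (lt_one_image hg hQ), fun x hx => ?_, fun x hx => ?_⟩
  · have hy : g.1⁻¹ (h.1⁻¹ x) ≤ P := inv_le_of hg (inv_le_of hh hx)
    refine comm_fix (g := g.1) (h := h.1) (y := g.1⁻¹ (h.1⁻¹ x)) (by simp) ?_
    generalize g.1⁻¹ (h.1⁻¹ x) = y at hy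
    have ha := le_min_iff.1 hy
    have hb := le_min_iff.1 ha.1
    have hc := le_min_iff.1 ha.2
    have h1 : g.1 y ≤ p' := by have := hg.monotone hc.1; simpa using this
    have h2 : h.1 y ≤ p := by have := hh.monotone hc.2; simpa using this
    apply Subtype.ext
    rw [hpm _ h2, hpm' _ h1, hpm _ hb.1, hpm' _ hb.2]
    ring
  · have hy : Q ≤ g.1⁻¹ (h.1⁻¹ x) := le_inv_of hg (le_inv_of hh hx)
    refine comm_fix (g := g.1) (h := h.1) (y := g.1⁻¹ (h.1⁻¹ x)) (by simp) ?_
    generalize g.1⁻¹ (h.1⁻¹ x) = y at hy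
    have ha := max_le_iff.1 hy
    have hb := max_le_iff.1 ha.1
    have hc := max_le_iff.1 ha.2
    have h1 : q' ≤ g.1 y := by have := hg.monotone hc.1; simpa using this
    have h2 : q ≤ h.1 y := by have := hh.monotone hc.2; simpa using this
    apply Subtype.ext
    have e1 := hqn _ h2
    rw [hqn' _ hb.2] at e1
    have e2 := hqn' _ h1
    rw [hqn _ hb.1] at e2
    have e3 : (2 : ℝ) ^ n * (2 ^ n' * (1 - (y : ℝ))) = 2 ^ n' * (2 ^ n * (1 - (y : ℝ))) := by ring
    linarith

theorem kerF_disp (hH : ∀ f, f ∈ H ↔ IsThompson f) (S : Finset H) (hS : ∀ s ∈ S, s ∈ kerF H) :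
    ∃ t : H, ∀ i j : ℤ, i ≠ j → ∀ s ∈ S, ∀ s' ∈ S,
      Commute (t ^ i * s * t ^ (-i)) (t ^ j * s' * t ^ (-j)) := by
  have hmono : ∀ f : H, StrictMono f.1 := fun f => thompson_mono ((hH _).1 f.2)
  obtain ⟨p, q, hp, hq, hpq⟩ : ∃ p q : UI, (0 : ℝ) < p ∧ (q : ℝ) < 1 ∧
      ∀ s ∈ S, (∀ x ≤ p, s.1 x = x) ∧ ∀ x ≥ q, s.1 x = x := by
    classical
    induction S using Finset.induction_on with
    | empty =>
      exact ⟨⟨1 / 2, by norm_num, by norm_num⟩, ⟨1 / 2, by norm_num, by norm_num⟩,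
        by norm_num, by norm_num, by simp⟩
    | insert a S _ ih =>
      obtain ⟨p, q, hp, hq, hpq⟩ := ih fun s hs => hS s (Finset.mem_insert_of_mem hs)
      obtain ⟨p', q', hp', hq', h1, h2⟩ := hS a (Finset.mem_insert_self _ _)
      refine ⟨min p p', max q q', min_pos' hp hp', max_lt' hq hq', fun s hs => ?_⟩
      rcases Finset.mem_insert.1 hs with rfl | hs
      · exact ⟨fun x hx => h1 x (le_min_iff.1 hx).2, fun x hx => h2 x (max_le_iff.1 hx).2⟩
      · exact ⟨fun x hx => (hpq s hs).1 x (le_min_iff.1 hx).1,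
          fun x hx => (hpq s hs).2 x (max_le_iff.1 hx).1⟩
  obtain ⟨m, hm⟩ := x0_push p q hp hq
  let t : H := ⟨x0 ^ m, H.pow_mem ((hH _).2 x0_thompson) m⟩
  have htge : ∀ x, x ≤ t.1 x := pow_ge x0_ge m
  have key : ∀ n : ℕ, ∀ s ∈ S, ∀ s' ∈ S, Commute s (t ^ (n + 1) * s' * (t ^ (n + 1))⁻¹) := by
    intro n s hs s' hs'
    have hT : q ≤ (t ^ (n + 1)).1 p := by
      have h1 : (t ^ (n + 1)).1 p = (t.1 ^ n) (t.1 p) := by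
        rw [← Equiv.Perm.mul_apply, ← pow_succ]; rfl
      rw [h1]
      exact hm.le.trans (pow_ge htge n _)
    have := commute_of_fix (hmono s) (hmono (t ^ (n + 1) * s' * (t ^ (n + 1))⁻¹)) q
      (hpq s hs).2 fun x hx => ?_
    · exact Subtype.ext this
    · exact conj_fix (g := (t ^ (n + 1)).1) (f := s'.1)
        ((hpq s' hs').1 _ (inv_le_of (hmono _) (hx.trans hT)))
  have key2 : ∀ i j : ℤ, i < j → ∀ s ∈ S, ∀ s' ∈ S,
      Commute (t ^ i * s * t ^ (-i)) (t ^ j * s' * t ^ (-j)) := by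
    intro i j hij s hs s' hs'
    obtain ⟨n, hn⟩ := Int.eq_ofNat_of_zero_le (by omega : 0 ≤ j - i - 1)
    have hj : j = i + ((n + 1 : ℕ) : ℤ) := by push_cast; omega
    have h1 := (Commute.conj_iff (t ^ i)).2 (key n s hs s' hs')
    have e : t ^ i * (t ^ (n + 1) * s' * (t ^ (n + 1))⁻¹) * (t ^ i)⁻¹ = t ^ j * s' * t ^ (-j) := by
      rw [hj, zpow_neg, zpow_add, zpow_natCast, mul_inv_rev]
      simp only [mul_assoc]
    rw [e, ← zpow_neg] at h1
    exact h1
  refine ⟨t, fun i j hij s hs s' hs' => ?_⟩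
  rcases lt_or_gt_of_ne hij with h | h
  · exact key2 i j h s hs s' hs'
  · exact (key2 j i h s' hs' s hs).symm
end Thompson


end Helpers

/-- For Thompson's group `F`, the vanishing `Hb^n(F,E) = 0` holds for
all `n ≥ 1` and all separable dual Banach `F`-modules `E = F₀*` (with the
contragredient action). -/
theorem thompsonF_bounded_cohomology_vanishes.{u}
    (H : Subgroup (Equiv.Perm ↥(Set.Icc (0 : ℝ) 1)))
    (hH : ∀ f, f ∈ H ↔ IsThompson f)
    (F₀ : Type u) [NormedAddCommGroup F₀] [NormedSpace ℝ F₀] [CompleteSpace F₀]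
    (ρ : H →* (F₀ ≃ₗᵢ[ℝ] F₀))
    (hsep : TopologicalSpace.SeparableSpace (F₀ →L[ℝ] ℝ)) :
    HbVanish (contragredient ρ) := by
  haveI := kerF_normal H hH
  exact vanish_of_K hsep ρ (kerF H) (kerF_comm H hH) (kerF_disp H hH)
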